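/- Let n ≥ 2 and a = (a_1,…,a_n), b = (b_1,…,b_n) ∈ ℂ^n with every a_j and b_k purely imaginary, and let s ∈ ℂ with Re(s) > 0. Then J_{0,n;a,b}(s) = [∏_{j=1}^{n} Γ_ℝ(s+a_j+b_n)·Γ_ℝ(s+a_j−b_n)]·J_{1,n−1;a,b̃}(s), where b̃ = (b_1,…,b_{n−1}). -/

import Mathlib

open MeasureTheory Complex

noncomputable section

/-- `Γ_ℝ(s) = π^{-s/2} Γ(s/2)`. -/
def GammaR (s : ℂ) : ℂ := (Real.pi : ℂ) ^ (-s / 2) * Complex.Gamma (s / 2)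

/-- Modified Bessel function of the second kind, via its integral representation. -/
def BesselK (ν : ℂ) (y : ℝ) : ℂ :=
  (1 / 2) * ∫ t in Set.Ioi (0 : ℝ),
    Complex.exp (-((y : ℂ) / 2) * ((t : ℂ) + 1 / (t : ℂ))) * (t : ℂ) ^ ν / (t : ℂ)

/-- Extend a finite real tuple to `ℕ`, defaulting to `1`. -/
def extR {k : ℕ} (t : Fin k → ℝ) : ℕ → ℝ := fun i => if h : i < k then t ⟨i, h⟩ else 1

/-- Extend a finite real tuple to `ℕ`, defaulting to `0`. -/
def extR0 {k : ℕ} (t : Fin k → ℝ) : ℕ → ℝ := fun i => if h : i < k then t ⟨i, h⟩ else 0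

/-- The positive orthant. -/
def posSet (k : ℕ) : Set (Fin k → ℝ) := {t | ∀ j, 0 < t j}

/-- `|a| = a_1 + ⋯ + a_n` (0-based indexing). -/
def sumA (n : ℕ) (a : ℕ → ℂ) : ℂ := ∑ j ∈ Finset.range n, a j

/-- `ã_j = a_{j+1} + a_1/(n-1)` (0-based indexing). -/
def tildeA (n : ℕ) (a : ℕ → ℂ) : ℕ → ℂ := fun j => a (j + 1) + a 0 / ((n : ℂ) - 1)

/-- The normalized radial part `Ŵ^A_{n,a}` of the class one `GL_n(ℝ)` Whittaker function,
as a function of `(y_1,…,y_{n-1})` (0-based indexing). -/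
def WhittAr : ℕ → (ℕ → ℂ) → (ℕ → ℝ) → ℂ
  | 0, _, _ => 1
  | 1, _, _ => 1
  | 2, a, y => 2 * ((y 0 : ℂ) ^ ((a 0 + a 1) / 2)) *
      BesselK ((a 0 - a 1) / 2) (2 * Real.pi * y 0)
  | (n + 3), a, y =>
      ∫ t in posSet (n + 2),
        WhittAr (n + 2) (tildeA (n + 3) a)
            (fun j => y (j + 1) * Real.sqrt (extR t (j + 1) / extR t j)) *
          (∏ j ∈ Finset.range (n + 2),
            Complex.exp (((-(Real.pi * y j) ^ 2 * extR t j - 1 / extR t j : ℝ) : ℂ)) *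
              ((Real.pi * y j : ℝ) : ℂ) ^ ((((n + 2 - j : ℕ) : ℂ) * a 0) / ((n + 2 : ℕ) : ℂ)) *
              ((extR t j : ℝ) : ℂ) ^ ((((n + 3 : ℕ) : ℂ) * a 0) / (2 * ((n + 2 : ℕ) : ℂ)))) *
          ((Real.pi * extR t (n + 1) : ℝ) : ℂ) ^ (-(sumA (n + 3) a) / 2) *
          (∏ j ∈ Finset.range (n + 2), ((extR t j : ℝ) : ℂ))⁻¹

/-- `Ŵ^A_{n,a}` as a function of the full tuple `(y_1,…,y_n)`. -/
def WhittAhat (n : ℕ) (a : ℕ → ℂ) (y : ℕ → ℝ) : ℂ :=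
  ((y (n - 1) : ℝ) : ℂ) ^ sumA n a * WhittAr n a y

/-- The Mellin transform `U_{n,a}` (0-based: `s j` stands for `s_{j+1}`). -/
def Ufun (n : ℕ) (a : ℕ → ℂ) (s : ℕ → ℂ) : ℂ :=
  ∫ y in posSet (n - 1),
    WhittAr n a (extR y) *
      ∏ j ∈ Finset.range (n - 1), ((extR y j : ℝ) : ℂ) ^ s j / ((extR y j : ℝ) : ℂ)

/-- The normalized radial part `Ŵ^B_{n,b}` of the class one `SO_{2n+1}(ℝ)` Whittaker function. -/
def WhittBr : ℕ → (ℕ → ℂ) → (ℕ → ℝ) → ℂ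
  | 0, _, _ => 1
  | 1, b, y => 2 * BesselK (b 0 / 2) (2 * Real.pi * y 0)
  | (n + 2), b, y =>
      ∫ p in (posSet (n + 2) ×ˢ posSet (n + 1)),
        WhittBr (n + 1) b
            (fun j =>
              if j < n then
                y (j + 1) *
                  Real.sqrt (extR p.1 (j + 1) * extR p.2 (j + 1) /
                    (extR p.1 (j + 2) * extR p.2 j))
              else y (n + 1) * Real.sqrt (extR p.1 (n + 1) / extR p.2 n)) *
          (∏ j ∈ Finset.range (n + 2),
            Complex.exp (((-(Real.pi * y j) ^ 2 * extR p.1 j - 1 / extR p.1 j : ℝ) : ℂ)) *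
              ((Real.pi * y j : ℝ) : ℂ) ^ b (n + 1)) *
          (∏ j ∈ Finset.range (n + 1),
            Complex.exp (((-(Real.pi * y j) ^ 2 * (extR p.1 j / extR p.1 (j + 1)) * extR p.2 j -
                  1 / extR p.2 j : ℝ) : ℂ)) *
              ((extR p.1 (j + 1) * extR p.2 j : ℝ) : ℂ) ^ (b (n + 1) / 2)) *
          ((extR p.1 0 : ℝ) : ℂ) ^ b (n + 1) *
          (∏ j ∈ Finset.range (n + 1), ((extR p.2 j : ℝ) : ℂ))⁻¹ *
          (∏ j ∈ Finset.range (n + 2), ((extR p.1 j : ℝ) : ℂ))⁻¹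

/-- The Mellin transform `V_{n,b}` (0-based: `s j` stands for `s_{j+1}`). -/
def Vfun (n : ℕ) (b : ℕ → ℂ) (s : ℕ → ℂ) : ℂ :=
  ∫ y in posSet n,
    WhittBr n b (extR y) *
      ∏ j ∈ Finset.range n, ((extR y j : ℝ) : ℂ) ^ s j / ((extR y j : ℝ) : ℂ)

/-- Integral over the vertical line `Re z = c`, i.e. `i·∫_ℝ f(c+it) dt`. -/
def VInt (c : ℝ) (f : ℂ → ℂ) : ℂ := Complex.I * ∫ t : ℝ, f (c + t * Complex.I)

/-- Iterated integral over `k` vertical lines with abscissas `c 0, …, c (k-1)`;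
the integrand is fed the contour points as a 0-based sequence. -/
def VIntK (k : ℕ) (c : ℕ → ℝ) (f : (ℕ → ℂ) → ℂ) : ℂ :=
  Complex.I ^ k * ∫ t : Fin k → ℝ, f (fun i => (c i : ℂ) + (extR0 t i : ℝ) * Complex.I)



/-- The archimedean `SO_{2n+1} × GL_n` zeta integral in torus coordinates. -/
def zetaJ0 (n : ℕ) (a b : ℕ → ℂ) (s : ℂ) : ℂ :=
  (2 : ℂ) ^ n * ∫ y in posSet n,
    WhittAhat n a (extR y) * WhittBr n b (extR y) *
      ∏ j ∈ Finset.range n,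
        ((extR y j : ℝ) : ℂ) ^ (((j + 1 : ℕ) : ℂ) * s) / ((extR y j : ℝ) : ℂ)

/-- The archimedean `SO_{2n+1} × GL_{n+1}` zeta integral in torus coordinates. -/
def zetaJ1 (n : ℕ) (a b : ℕ → ℂ) (s : ℂ) : ℂ :=
  (2 : ℂ) ^ n * ∫ y in posSet n,
    WhittAhat (n + 1) a (extR y) * WhittBr n b (extR y) *
      ∏ j ∈ Finset.range n,
        ((extR y j : ℝ) : ℂ) ^ (((j + 1 : ℕ) : ℂ) * s) / ((extR y j : ℝ) : ℂ)

def expPi {k : ℕ} (τ : Fin k → ℝ) : Fin k → ℝ := fun j => Real.exp (τ j)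

lemma expPi_injective (k : ℕ) : Function.Injective (expPi (k := k)) := fun _ _ h =>
  funext fun j => Real.exp_injective (congrFun h j)

lemma range_expPi (k : ℕ) : Set.range (expPi (k := k)) = posSet k := by
  ext t
  constructor
  · rintro ⟨τ, rfl⟩ j
    exact Real.exp_pos _
  · intro ht
    exact ⟨fun j => Real.log (t j), funext fun j => Real.exp_log (ht j)⟩

/-- The derivative of `expPi`, a diagonal map. -/
def expPiDeriv {k : ℕ} (τ : Fin k → ℝ) : (Fin k → ℝ) →L[ℝ] (Fin k → ℝ) :=
  ContinuousLinearMap.pi fun j => Real.exp (τ j) • ContinuousLinearMap.proj j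

lemma hasFDerivAt_expPi {k : ℕ} (τ : Fin k → ℝ) : HasFDerivAt expPi (expPiDeriv τ) τ := by
  rw [hasFDerivAt_pi']
  intro j
  have := (Real.hasDerivAt_exp (τ j)).comp_hasFDerivAt τ
    (ContinuousLinearMap.proj (R := ℝ) (φ := fun _ : Fin k => ℝ) j).hasFDerivAt
  exact this

lemma det_expPiDeriv {k : ℕ} (τ : Fin k → ℝ) :
    LinearMap.det (expPiDeriv τ : (Fin k → ℝ) →ₗ[ℝ] (Fin k → ℝ)) = ∏ j, Real.exp (τ j) := by
  have : (expPiDeriv τ : (Fin k → ℝ) →ₗ[ℝ] (Fin k → ℝ)) =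
      Matrix.toLin' (Matrix.diagonal fun j => Real.exp (τ j)) := by
    ext v j
    simp [expPiDeriv, Matrix.mulVec_diagonal, Pi.single_apply]
  rw [this, LinearMap.det_toLin', Matrix.det_diagonal]

lemma setIntegral_posSet (k : ℕ) (g : (Fin k → ℝ) → ℂ) :
    ∫ t in posSet k, g t = ∫ τ, ((∏ j, Real.exp (τ j) : ℝ) : ℂ) * g (expPi τ) := by
  rw [← range_expPi, ← Set.image_univ, integral_image_eq_integral_abs_det_fderiv_smul volume
    MeasurableSet.univ (fun τ _ => (hasFDerivAt_expPi τ).hasFDerivWithinAt)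
    (expPi_injective k).injOn, setIntegral_univ]
  congr with τ
  rw [ContinuousLinearMap.det, det_expPiDeriv, abs_of_pos (by positivity)]
  exact real_smul

lemma setIntegral_posSet_prod (k l : ℕ) (g : (Fin k → ℝ) × (Fin l → ℝ) → ℂ) :
    ∫ p in posSet k ×ˢ posSet l, g p =
      ∫ p : (Fin k → ℝ) × (Fin l → ℝ), ((∏ j, Real.exp (p.1 j) : ℝ) : ℂ) *
        ((∏ j, Real.exp (p.2 j) : ℝ) : ℂ) * g (expPi p.1, expPi p.2) := by
  have him : posSet k ×ˢ posSet l = Prod.map (expPi (k := k)) (expPi (k := l)) '' Set.univ := by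
    rw [← range_expPi, ← range_expPi, Set.image_univ, Set.range_prodMap]
  have : (volume : Measure ((Fin k → ℝ) × (Fin l → ℝ))).IsAddHaarMeasure :=
    Measure.prod.instIsAddHaarMeasure _ _
  rw [him, integral_image_eq_integral_abs_det_fderiv_smul volume MeasurableSet.univ
    (fun p _ => ((hasFDerivAt_expPi p.1).prodMap p (hasFDerivAt_expPi p.2)).hasFDerivWithinAt)
    ((expPi_injective k).prodMap (expPi_injective l)).injOn, setIntegral_univ]
  congr with p
  rw [ContinuousLinearMap.det, ContinuousLinearMap.coe_prodMap, LinearMap.det_prodMap,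
    det_expPiDeriv, det_expPiDeriv, abs_of_pos (by positivity), real_smul, ofReal_mul]
  rfl

def rootMatrix (k : ℕ) : Matrix (Fin k) (Fin k) ℝ :=
  fun i j => if j = i then 1 / 2 else if (j : ℕ) = i + 1 then -(1 / 2) else 0

lemma det_rootMatrix (k : ℕ) : (rootMatrix k).det = (1 / 2) ^ k := by
  rw [Matrix.det_of_isUpperTriangular]
  · simp [rootMatrix]
  · intro i j hij
    have hij : j < i := hij
    have h1 : j ≠ i := hij.ne
    have h2 : (j : ℕ) ≠ i + 1 := by have : (j : ℕ) < i := hij; omega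
    simp [rootMatrix, h1, h2]

/-- Logarithms of the simple-root coordinates `y_j = π⁻¹ (x_j / x_{j+1})^{1/2}`, where
`x = exp ξ`. -/
def logRoot {k : ℕ} (ξ : Fin k → ℝ) : Fin k → ℝ :=
  fun j => (extR0 ξ j - extR0 ξ (j + 1)) / 2 - Real.log Real.pi

lemma logRoot_eq {k : ℕ} (ξ : Fin k → ℝ) :
    logRoot ξ = Matrix.toLin' (rootMatrix k) ξ - fun _ => Real.log Real.pi := by
  ext i
  have h : ∀ j : Fin k, rootMatrix k i j * ξ j =
      (if j = i then ξ j / 2 else 0) - (if (j : ℕ) = i + 1 then ξ j / 2 else 0) := by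
    intro j
    by_cases h1 : j = i
    · simp [rootMatrix, h1]; ring
    · by_cases h2 : (j : ℕ) = i + 1
      · simp [rootMatrix, h1, h2]; ring
      · simp [rootMatrix, h1, h2]
  simp only [logRoot, Pi.sub_apply, Matrix.toLin'_apply, Matrix.mulVec, dotProduct, h,
    Finset.sum_sub_distrib, Finset.sum_ite_eq', Finset.mem_univ, if_true]
  by_cases hi : (i : ℕ) + 1 < k
  · have : ∀ j : Fin k, (j : ℕ) = i + 1 ↔ j = ⟨i + 1, hi⟩ := fun j => by rw [Fin.ext_iff]
    simp only [this, Finset.sum_ite_eq', Finset.mem_univ, if_true, extR0, i.2, hi, dif_pos]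
    ring
  · have : ∀ j : Fin k, ¬ (j : ℕ) = i + 1 := fun j => by omega
    simp [this, extR0, hi]

lemma integral_comp_logRoot (k : ℕ) (g : (Fin k → ℝ) → ℂ) :
    ∫ ξ, g (logRoot ξ) = 2 ^ k * ∫ η, g η := by
  have hdet : LinearMap.det (Matrix.toLin' (rootMatrix k)) = (1 / 2) ^ k := by
    rw [LinearMap.det_toLin', det_rootMatrix]
  have hne : LinearMap.det (Matrix.toLin' (rootMatrix k)) ≠ 0 := by rw [hdet]; positivity
  let e := LinearMap.equivOfDetNeZero _ hne
  have he : ∀ ξ, e ξ = Matrix.toLin' (rootMatrix k) ξ := fun ξ => rfl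
  have key := integral_image_eq_integral_abs_det_fderiv_smul (F := ℂ)
    (volume : Measure (Fin k → ℝ)) MeasurableSet.univ
    (f := e) (f' := fun _ => LinearMap.toContinuousLinearMap (Matrix.toLin' (rootMatrix k)))
    (fun ξ _ => (LinearMap.toContinuousLinearMap
      (Matrix.toLin' (rootMatrix k))).hasFDerivAt.hasFDerivWithinAt)
    e.injective.injOn (fun η => g (η - fun _ => Real.log Real.pi))
  rw [Set.image_univ, e.surjective.range_eq, setIntegral_univ, setIntegral_univ,
    integral_sub_right_eq_self g] at key
  simp only [LinearMap.det_toContinuousLinearMap, hdet] at key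
  rw [key, abs_of_pos (by positivity), integral_smul, real_smul, ← mul_assoc]
  simp only [he, ← logRoot_eq]
  push_cast
  rw [← mul_pow]
  norm_num

lemma integral_cexp_mul_sub_exp {s : ℂ} (hs : 0 < s.re) :
    ∫ x : ℝ, cexp (s * x - Real.exp x) = Complex.Gamma s := by
  rw [Complex.Gamma_eq_integral hs, Complex.GammaIntegral, ← Real.range_exp, ← Set.image_univ,
    integral_image_eq_integral_abs_deriv_smul MeasurableSet.univ
      (fun x _ => (Real.hasDerivAt_exp x).hasDerivWithinAt) Real.exp_injective.injOn,
    setIntegral_univ]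
  congr with x
  rw [abs_of_pos (Real.exp_pos x), real_smul, ofReal_exp, ofReal_exp, ← ofReal_exp x,
    cpow_def_of_ne_zero (by exact_mod_cast (Real.exp_pos x).ne'), ← ofReal_log (Real.exp_pos x).le,
    Real.log_exp, ofReal_exp, ← Complex.exp_add, ← Complex.exp_add]
  congr 1
  push_cast
  ring

lemma lintegral_exp_mul_sub_exp {σ : ℝ} (hσ : 0 < σ) :
    ∫⁻ x : ℝ, ENNReal.ofReal (Real.exp (σ * x - Real.exp x)) = ENNReal.ofReal (Real.Gamma σ) := by
  have h1 : ∫ x : ℝ, Real.exp (σ * x - Real.exp x) = Real.Gamma σ := by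
    have := integral_cexp_mul_sub_exp (s := σ) (by simpa using hσ)
    rw [Complex.Gamma_ofReal] at this
    rw [← ofReal_inj, ← this, ← integral_complex_ofReal]
    push_cast
    rfl
  rw [← h1, ofReal_integral_eq_lintegral_ofReal]
  · exact Integrable.of_integral_ne_zero (h1 ▸ (Real.Gamma_pos_of_pos hσ).ne')
  · exact Filter.Eventually.of_forall fun x => (Real.exp_pos _).le

/-- The exponent of the kernel in the recursion for `GL` Whittaker functions. -/
def kerL {n : ℕ} (ξ : Fin (n + 1) → ℝ) (ω : Fin n → ℝ) : ℝ :=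
  ∑ j : Fin n, (Real.exp (ξ j.castSucc - ω j) + Real.exp (ω j - ξ j.succ))

/-- The exponent of the kernel of the Baxter operator. -/
def kerQ {n : ℕ} (ξ ω : Fin (n + 1) → ℝ) : ℝ :=
  ∑ j, Real.exp (ξ j - ω j) + ∑ j : Fin n, Real.exp (ω j.castSucc - ξ j.succ)

/-- The shift vector of the substitution in the exchange relation. -/
def exchangeShift {n : ℕ} (ω : Fin (n + 2) → ℝ) (ζ : Fin (n + 1) → ℝ) : Fin (n + 2) → ℝ :=
  Fin.cons (-Real.log (Real.exp (-ω 0) + Real.exp (-ζ 0))) fun j : Fin (n + 1) =>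
    Real.log (Real.exp (ω j.castSucc) + Real.exp (ζ j)) -
      Real.log (Real.exp (-ω j.succ) +
        (Fin.snoc (fun i : Fin n => Real.exp (-ζ i.succ)) 0 : Fin (n + 1) → ℝ) j)

lemma snoc_exp_nonneg {n : ℕ} (ζ : Fin (n + 1) → ℝ) (j : Fin (n + 1)) :
    0 ≤ (Fin.snoc (fun i : Fin n => Real.exp (-ζ i.succ)) 0 : Fin (n + 1) → ℝ) j := by
  refine Fin.lastCases ?_ (fun i => ?_) j
  · simp
  · simp [Real.exp_nonneg]

lemma exchange_kernel {n : ℕ} (ω : Fin (n + 2) → ℝ) (ζ : Fin (n + 1) → ℝ) (x : ℝ)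
    (θ : Fin (n + 1) → ℝ) :
    kerQ (exchangeShift ω ζ - Fin.cons x θ) ω + kerL (exchangeShift ω ζ - Fin.cons x θ) ζ =
      Real.exp (-x) + (kerL ω θ + kerQ ζ θ) := by
  set A0 := Real.exp (-ω 0) + Real.exp (-ζ 0) with hA0
  have hA0pos : 0 < A0 := by positivity
  set A : Fin (n + 1) → ℝ := fun j => Real.exp (-ω j.succ) +
        (Fin.snoc (fun i : Fin n => Real.exp (-ζ i.succ)) 0 : Fin (n + 1) → ℝ) j with hA
  have hApos : ∀ j, 0 < A j := fun j =>
    add_pos_of_pos_of_nonneg (Real.exp_pos _) (snoc_exp_nonneg ζ j)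
  set B : Fin (n + 1) → ℝ := fun j => Real.exp (ω j.castSucc) + Real.exp (ζ j) with hB
  have hBpos : ∀ j, 0 < B j := fun j => by positivity
  set ξ := exchangeShift ω ζ - Fin.cons x θ with hξ
  have hξ0 : ξ 0 = -Real.log A0 - x := by simp [hξ, exchangeShift, hA0]
  have hξs : ∀ j : Fin (n + 1), ξ j.succ = Real.log (B j) - Real.log (A j) - θ j := fun j => by
    simp [hξ, exchangeShift, hA, hB]
  have e1 : ∀ j, Real.exp (ξ j.succ) * A j = B j * Real.exp (-θ j) := fun j => by
    rw [hξs, sub_sub, sub_eq_add_neg, neg_add, Real.exp_add, Real.exp_add, Real.exp_neg (Real.log _),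
      Real.exp_log (hBpos j), Real.exp_log (hApos j)]
    field_simp [(hApos j).ne']
  have e2 : ∀ j, B j * Real.exp (-ξ j.succ) = A j * Real.exp (θ j) := fun j => by
    have := e1 j
    rw [Real.exp_neg] at this ⊢
    field_simp at this ⊢
    linarith
  have e0 : Real.exp (ξ 0) * A0 = Real.exp (-x) := by
    rw [hξ0, sub_eq_add_neg, Real.exp_add, Real.exp_neg (Real.log _), Real.exp_log hA0pos]
    field_simp
  have hsum : ∀ f : Fin (n + 1) → ℝ, ∑ j, f j * A j =
      ∑ j : Fin (n + 1), f j * Real.exp (-ω j.succ) +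
        ∑ j : Fin n, f j.castSucc * Real.exp (-ζ j.succ) := fun f => by
    simp only [hA, mul_add, Finset.sum_add_distrib, add_right_inj]
    rw [Fin.sum_univ_castSucc]
    simp
  have hQL : kerQ ξ ω + kerL ξ ζ = Real.exp (ξ 0) * A0 +
      ∑ j : Fin (n + 1), Real.exp (ξ j.succ) * A j +
      ∑ j : Fin (n + 1), B j * Real.exp (-ξ j.succ) := by
    rw [hsum (fun j => Real.exp (ξ j.succ))]
    simp only [kerQ, kerL, hA0, hB, mul_add, add_mul, Finset.sum_add_distrib, ← Real.exp_add,
      ← sub_eq_add_neg]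
    rw [Fin.sum_univ_succ, Fin.sum_univ_succ (n := n) (f := fun j => Real.exp (ξ j.castSucc - ζ j))]
    simp only [Fin.castSucc_zero, Fin.succ_castSucc]
    ring
  have hLQ : kerL ω θ + kerQ ζ θ = ∑ j : Fin (n + 1), Real.exp (θ j) * A j +
      ∑ j : Fin (n + 1), B j * Real.exp (-θ j) := by
    rw [hsum (fun j => Real.exp (θ j))]
    simp only [kerQ, kerL, hB, add_mul, Finset.sum_add_distrib, ← Real.exp_add,
      ← sub_eq_add_neg]
    ring
  rw [hQL, hLQ, e0, Finset.sum_congr rfl fun j _ => e1 j, Finset.sum_congr rfl fun j _ => e2 j]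
  simp only [mul_comm (A _)]
  ring

lemma sum_exchangeShift {n : ℕ} (ω : Fin (n + 2) → ℝ) (ζ : Fin (n + 1) → ℝ) :
    ∑ j, exchangeShift ω ζ j = ∑ j, ω j + ∑ j, ζ j := by
  have hB : ∀ (p q : ℝ), Real.log (Real.exp p + Real.exp q) =
      Real.log (Real.exp (-p) + Real.exp (-q)) + p + q := fun p q => by
    have : Real.exp p + Real.exp q =
        (Real.exp (-p) + Real.exp (-q)) * (Real.exp p * Real.exp q) := by
      rw [Real.exp_neg, Real.exp_neg]
      field_simp
      ring
    rw [this, Real.log_mul (by positivity) (by positivity),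
      Real.log_mul (by positivity) (by positivity), Real.log_exp, Real.log_exp]
    ring
  have hB' := fun j : Fin (n + 1) => hB (ω j.castSucc) (ζ j)
  rw [Fin.sum_univ_succ]
  simp only [exchangeShift, Fin.cons_zero, Fin.cons_succ, hB', Finset.sum_sub_distrib,
    Finset.sum_add_distrib]
  rw [Fin.sum_univ_succ (f := fun j : Fin (n + 1) =>
      Real.log (Real.exp (-ω j.castSucc) + Real.exp (-ζ j))),
    Fin.sum_univ_castSucc (f := fun j : Fin (n + 1) => Real.log (Real.exp (-ω j.succ) + _)),
    Fin.sum_univ_castSucc (f := ω)]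
  simp
  ring

lemma sum_sub_cons {n : ℕ} (c : Fin (n + 1) → ℝ) (x : ℝ) (θ : Fin n → ℝ) :
    ∑ j, (c - (Fin.cons x θ : Fin (n + 1) → ℝ)) j = ∑ j, c j - x - ∑ j, θ j := by
  simp only [Pi.sub_apply, Finset.sum_sub_distrib]
  rw [Fin.sum_univ_succ (f := (Fin.cons x θ : Fin (n + 1) → ℝ))]
  simp
  ring

lemma piFinSuccAbove_zero_symm_apply {n : ℕ} (p : ℝ × (Fin n → ℝ)) :
    (MeasurableEquiv.piFinSuccAbove (fun _ : Fin (n + 1) => ℝ) 0).symm p = Fin.cons p.1 p.2 :=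
  Fin.insertNth_zero (α := fun _ : Fin (n + 1) => ℝ) p.1 p.2

lemma integral_fin_cons (n : ℕ) (f : (Fin (n + 1) → ℝ) → ℂ) :
    ∫ ξ, f ξ = ∫ p : ℝ × (Fin n → ℝ), f (Fin.cons p.1 p.2) := by
  simpa only [piFinSuccAbove_zero_symm_apply] using (((volume_preserving_piFinSuccAbove (fun _ : Fin (n + 1) => ℝ) 0).symm).integral_comp' f).symm

lemma lintegral_fin_cons (n : ℕ) (f : (Fin (n + 1) → ℝ) → ENNReal) :
    ∫⁻ ξ, f ξ = ∫⁻ p : ℝ × (Fin n → ℝ), f (Fin.cons p.1 p.2) := by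
  simpa only [piFinSuccAbove_zero_symm_apply] using (((volume_preserving_piFinSuccAbove (fun _ : Fin (n + 1) => ℝ) 0).symm).lintegral_comp_emb
    (MeasurableEquiv.measurableEmbedding _) f).symm

lemma exchange_integral {n : ℕ} {c d : ℂ} (hc : 0 < (c + d).re) (ω : Fin (n + 2) → ℝ)
    (ζ : Fin (n + 1) → ℝ) :
    ∫ ξ : Fin (n + 2) → ℝ, cexp (c * ((∑ j, ξ j - ∑ j, ω j : ℝ) : ℂ) +
        d * ((∑ j, ξ j - ∑ j, ζ j : ℝ) : ℂ) - ((kerQ ξ ω + kerL ξ ζ : ℝ) : ℂ)) =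
      Complex.Gamma (c + d) * ∫ θ : Fin (n + 1) → ℝ,
        cexp (d * ((∑ j, ω j - ∑ j, θ j : ℝ) : ℂ) +
          c * ((∑ j, ζ j - ∑ j, θ j : ℝ) : ℂ) - ((kerL ω θ + kerQ ζ θ : ℝ) : ℂ)) := by
  rw [← integral_sub_left_eq_self _ volume (exchangeShift ω ζ), integral_fin_cons,
    ← integral_cexp_mul_sub_exp hc, ← integral_neg_eq_self (fun x : ℝ => cexp _),
    ← integral_prod_mul]
  refine integral_congr_ae (Filter.Eventually.of_forall fun p => ?_)
  dsimp only
  rw [exchange_kernel, sum_sub_cons, sum_exchangeShift, ← Complex.exp_add]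
  congr 1
  push_cast
  ring

lemma exchange_lintegral {n : ℕ} {σ : ℝ} (hσ : 0 < σ) (ω : Fin (n + 2) → ℝ)
    (ζ : Fin (n + 1) → ℝ) :
    ∫⁻ ξ : Fin (n + 2) → ℝ, ENNReal.ofReal (Real.exp (σ * (∑ j, ξ j - ∑ j, ω j) -
        (kerQ ξ ω + kerL ξ ζ))) =
      ENNReal.ofReal (Real.Gamma σ) * ∫⁻ θ : Fin (n + 1) → ℝ,
        ENNReal.ofReal (Real.exp (σ * (∑ j, ζ j - ∑ j, θ j) - (kerL ω θ + kerQ ζ θ))) := by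
  have hneg : ∫⁻ x : ℝ, ENNReal.ofReal (Real.exp (σ * -x - Real.exp (-x))) =
      ENNReal.ofReal (Real.Gamma σ) := by
    rw [← lintegral_exp_mul_sub_exp hσ, ← lintegral_sub_left_eq_self _ (0 : ℝ)]
    simp
  rw [← lintegral_sub_left_eq_self _ (exchangeShift ω ζ), lintegral_fin_cons, ← hneg,
    ← lintegral_prod_mul]
  · refine lintegral_congr fun p => ?_
    rw [exchange_kernel, sum_sub_cons, sum_exchangeShift, ← ENNReal.ofReal_mul (Real.exp_nonneg _),
      ← Real.exp_add]
    congr 2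
    ring
  · fun_prop
  · unfold kerL kerQ
    fun_prop

@[fun_prop]
lemma continuous_kerL {α : Type*} [TopologicalSpace α] {n : ℕ} {f : α → Fin (n + 1) → ℝ}
    {g : α → Fin n → ℝ} (hf : Continuous f) (hg : Continuous g) :
    Continuous fun x => kerL (f x) (g x) := by
  unfold kerL
  fun_prop

@[fun_prop]
lemma continuous_kerQ {α : Type*} [TopologicalSpace α] {n : ℕ} {f g : α → Fin (n + 1) → ℝ}
    (hf : Continuous f) (hg : Continuous g) : Continuous fun x => kerQ (f x) (g x) := by
  unfold kerQ
  fun_prop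

/-- The class one `GL_{n+1}(ℝ)` Whittaker function in logarithmic Givental coordinates. -/
def Psi : (n : ℕ) → (ℕ → ℂ) → (Fin (n + 1) → ℝ) → ℂ
  | 0, a, ξ => cexp (a 0 * ((ξ 0 : ℝ) : ℂ))
  | n + 1, a, ξ => ∫ ω : Fin (n + 1) → ℝ,
      cexp (a 0 * ((∑ j, ξ j - ∑ j, ω j : ℝ) : ℂ) - ((kerL ξ ω : ℝ) : ℂ)) *
        Psi n (fun j => a (j + 1)) ω

/-- The Whittaker function with trivial spectral parameter, with values in `[0, ∞]`. -/
def majPsi : (n : ℕ) → (Fin (n + 1) → ℝ) → ENNReal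
  | 0, _ => 1
  | n + 1, ξ => ∫⁻ ω : Fin (n + 1) → ℝ, ENNReal.ofReal (Real.exp (-kerL ξ ω)) * majPsi n ω

@[fun_prop]
lemma measurable_Psi (n : ℕ) (a : ℕ → ℂ) : Measurable (Psi n a) := by
  induction n generalizing a with
  | zero =>
    change Measurable fun ξ : Fin 1 → ℝ => cexp (a 0 * ((ξ 0 : ℝ) : ℂ))
    fun_prop
  | succ n ih =>
    have h : StronglyMeasurable fun p : (Fin (n + 2) → ℝ) × (Fin (n + 1) → ℝ) =>
        cexp (a 0 * ((∑ j, p.1 j - ∑ j, p.2 j : ℝ) : ℂ) - ((kerL p.1 p.2 : ℝ) : ℂ)) *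
          Psi n (fun j => a (j + 1)) p.2 := by
      refine Measurable.stronglyMeasurable (Measurable.mul ?_ ((ih _).comp measurable_snd))
      exact Continuous.measurable (by fun_prop)
    exact h.integral_prod_right'.measurable

@[fun_prop]
lemma measurable_majPsi (n : ℕ) : Measurable (majPsi n) := by
  induction n with
  | zero => exact measurable_const
  | succ n ih =>
    have h : Measurable fun p : (Fin (n + 2) → ℝ) × (Fin (n + 1) → ℝ) =>
        ENNReal.ofReal (Real.exp (-kerL p.1 p.2)) * majPsi n p.2 := by
      refine Measurable.mul ?_ (ih.comp measurable_snd)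
      exact ENNReal.measurable_ofReal.comp (Continuous.measurable (by fun_prop))
    exact h.lintegral_prod_right'

lemma enorm_cexp (z : ℂ) : ‖cexp z‖ₑ = ENNReal.ofReal (Real.exp z.re) := by
  rw [← ofReal_norm, Complex.norm_exp]

lemma enorm_Psi_le (n : ℕ) (a : ℕ → ℂ) (ha : ∀ j < n + 1, (a j).re = 0) (ξ : Fin (n + 1) → ℝ) :
    ‖Psi n a ξ‖ₑ ≤ majPsi n ξ := by
  induction n generalizing a with
  | zero => simp [Psi, majPsi, enorm_cexp, ha 0]
  | succ n ih =>
    refine (enorm_integral_le_lintegral_enorm _).trans (lintegral_mono fun ω => ?_)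
    dsimp only
    rw [enorm_mul, enorm_cexp]
    refine mul_le_mul' (le_of_eq ?_) (ih _ (fun j hj => ha (j + 1) (by omega)) ω)
    simp [ha 0]

lemma mul_sub_exp_le {κ : ℝ} (hκ : 0 < κ) (r : ℝ) :
    κ * r - Real.exp r ≤ κ * Real.log κ - κ := by
  have h := Real.add_one_le_exp (r - Real.log κ)
  have h2 : Real.exp r = κ * Real.exp (r - Real.log κ) := by
    rw [Real.exp_sub, Real.exp_log hκ]
    field_simp
  nlinarith

lemma exists_lintegral_bessel_le {δ κ : ℝ} (hκ : 0 < κ) (hδ : δ < κ) :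
    ∃ C : ENNReal, C ≠ ⊤ ∧ ∀ p q : ℝ,
      ∫⁻ τ : ℝ, ENNReal.ofReal (Real.exp (δ * τ - Real.exp (p - τ) - Real.exp (τ - q))) ≤
        C * ENNReal.ofReal (Real.exp (κ * q + (δ - κ) * p)) := by
  refine ⟨ENNReal.ofReal (Real.exp (κ * Real.log κ - κ)) * ENNReal.ofReal (Real.Gamma (κ - δ)),
    ENNReal.mul_ne_top ENNReal.ofReal_ne_top ENNReal.ofReal_ne_top, fun p q => ?_⟩
  rw [← lintegral_sub_left_eq_self _ p, ← lintegral_exp_mul_sub_exp (sub_pos.2 hδ),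
    ← lintegral_const_mul' _ _ ENNReal.ofReal_ne_top,
    ← lintegral_mul_const' _ _ ENNReal.ofReal_ne_top]
  refine lintegral_mono fun x => ?_
  rw [← ENNReal.ofReal_mul (Real.exp_nonneg _), ← ENNReal.ofReal_mul (by positivity),
    ← Real.exp_add, ← Real.exp_add]
  refine ENNReal.ofReal_le_ofReal (Real.exp_le_exp.2 ?_)
  have := mul_sub_exp_le hκ (p - x - q)
  rw [sub_sub_cancel]
  linarith

lemma lintegral_fin_prod (n : ℕ) (f : Fin n → ℝ → ENNReal) (hf : ∀ j, Measurable (f j)) :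
    ∫⁻ ω : Fin n → ℝ, ∏ j, f j (ω j) = ∏ j, ∫⁻ x, f j x := by
  induction n with
  | zero => simp [volume_pi]
  | succ n ih =>
    rw [lintegral_fin_cons, Fin.prod_univ_succ, ← ih _ fun j => hf j.succ, ← lintegral_prod_mul]
    · simp [Fin.prod_univ_succ]
      rfl
    · exact (hf 0).aemeasurable
    · exact (Finset.measurable_prod _ fun j _ =>
        (hf j.succ).comp (measurable_pi_apply j)).aemeasurable

lemma exists_lintegral_bessel_pi_le {n : ℕ} {δ κ : Fin n → ℝ} (hκ : ∀ j, 0 < κ j)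
    (hδ : ∀ j, δ j < κ j) :
    ∃ C : ENNReal, C ≠ ⊤ ∧ ∀ p q : Fin n → ℝ,
      ∫⁻ ω : Fin n → ℝ, ENNReal.ofReal (Real.exp
          (∑ j, (δ j * ω j - Real.exp (p j - ω j) - Real.exp (ω j - q j)))) ≤
        C * ENNReal.ofReal (Real.exp (∑ j, (κ j * q j + (δ j - κ j) * p j))) := by
  choose C hC hle using fun j => exists_lintegral_bessel_le (hκ j) (hδ j)
  refine ⟨∏ j, C j, ENNReal.prod_ne_top fun j _ => hC j, fun p q => ?_⟩
  simp only [Real.exp_sum]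
  rw [ENNReal.ofReal_prod_of_nonneg fun _ _ => Real.exp_nonneg _, ← Finset.prod_mul_distrib]
  calc _ = ∫⁻ ω : Fin n → ℝ, ∏ j, ENNReal.ofReal (Real.exp
          (δ j * ω j - Real.exp (p j - ω j) - Real.exp (ω j - q j))) := by
        refine lintegral_congr fun ω => ?_
        rw [ENNReal.ofReal_prod_of_nonneg fun _ _ => Real.exp_nonneg _]
    _ = ∏ j, ∫⁻ x : ℝ, ENNReal.ofReal (Real.exp
          (δ j * x - Real.exp (p j - x) - Real.exp (x - q j))) :=
        lintegral_fin_prod n (fun j x => ENNReal.ofReal (Real.exp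
          (δ j * x - Real.exp (p j - x) - Real.exp (x - q j)))) fun j => by fun_prop
    _ ≤ _ := Finset.prod_le_prod' fun j _ => hle j (p j) (q j)

lemma sum_succ_sub_castSucc {n : ℕ} (ω : Fin (n + 1) → ℝ) :
    ∑ j : Fin n, (ω j.succ - ω j.castSucc) = ω (Fin.last n) - ω 0 := by
  have h1 := Fin.sum_univ_succ ω
  have h2 := Fin.sum_univ_castSucc ω
  rw [Finset.sum_sub_distrib]
  linarith

lemma exists_majPsi_le (n : ℕ) (e : Fin n → ℝ) (he : ∀ j, 0 < e j) :
    ∃ C : ENNReal, C ≠ ⊤ ∧ ∀ ξ, majPsi n ξ ≤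
      C * ENNReal.ofReal (Real.exp (∑ j, e j * (ξ j.succ - ξ j.castSucc))) := by
  induction n with
  | zero => exact ⟨1, ENNReal.one_ne_top, fun ξ => by simp [majPsi]⟩
  | succ n ih =>
    obtain ⟨ε, hε, hεe⟩ : ∃ ε, 0 < ε ∧ ∀ j, ε < e j := by
      have hne : (Finset.univ : Finset (Fin (n + 1))).Nonempty := Finset.univ_nonempty
      refine ⟨Finset.univ.inf' hne e / 2, ?_, fun j => ?_⟩
      · exact half_pos ((Finset.lt_inf'_iff hne).2 fun j _ => he j)
      · have h1 := Finset.inf'_le e (Finset.mem_univ j)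
        have h2 := (Finset.lt_inf'_iff hne).2 fun j _ => he j
        linarith
    obtain ⟨C, hC, hCle⟩ := ih (fun _ => ε) fun _ => hε
    let δ : Fin (n + 1) → ℝ := fun j =>
      (if j = Fin.last n then ε else 0) - (if j = 0 then ε else 0)
    let κ : Fin (n + 1) → ℝ := fun j => e j - if j = Fin.last n then 0 else ε
    have hκ : ∀ j, 0 < κ j := fun j => by
      simp only [κ]; split_ifs <;> linarith [hεe j]
    have hδ : ∀ j, δ j < κ j := fun j => by
      simp only [κ, δ]; split_ifs <;> linarith [hεe j]
    obtain ⟨D, hD, hDle⟩ := exists_lintegral_bessel_pi_le hκ hδ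
    refine ⟨C * D, ENNReal.mul_ne_top hC hD, fun ξ => ?_⟩
    have hδsum : ∀ ω : Fin (n + 1) → ℝ, ∑ j, δ j * ω j = ε * (ω (Fin.last n) - ω 0) := fun ω => by
      simp [δ, sub_mul, Finset.sum_sub_distrib, ite_mul, mul_sub]
    calc majPsi (n + 1) ξ ≤ ∫⁻ ω : Fin (n + 1) → ℝ, C * ENNReal.ofReal (Real.exp
          (∑ j, (δ j * ω j - Real.exp (ξ j.castSucc - ω j) - Real.exp (ω j - ξ j.succ)))) := by
          refine lintegral_mono fun ω => ?_
          refine (mul_le_mul_right (hCle ω) _).trans (le_of_eq ?_)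
          rw [mul_left_comm, ← ENNReal.ofReal_mul (Real.exp_nonneg _), ← Real.exp_add,
            ← Finset.mul_sum, sum_succ_sub_castSucc, ← hδsum]
          simp only [kerL, Finset.sum_sub_distrib, Finset.sum_add_distrib]
          congr 3
          ring
      _ ≤ C * (D * ENNReal.ofReal (Real.exp
          (∑ j, (κ j * ξ j.succ + (δ j - κ j) * ξ j.castSucc)))) := by
          rw [lintegral_const_mul' _ _ hC]
          exact mul_le_mul_right (hDle (fun j => ξ j.castSucc) fun j => ξ j.succ) _
      _ = _ := by
          rw [← mul_assoc]
          congr 3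
          have h1 := hδsum fun j => ξ j.castSucc
          have h2 := sum_succ_sub_castSucc fun j : Fin (n + 1) => ξ j.castSucc
          have h3 : ∀ j, κ j * ξ j.succ + (δ j - κ j) * ξ j.castSucc =
            e j * (ξ j.succ - ξ j.castSucc) + (δ j * ξ j.castSucc -
              (if j = Fin.last n then 0 else ε) * (ξ j.succ - ξ j.castSucc)) := fun j => by
              simp only [κ]; ring
          rw [Finset.sum_congr rfl fun j _ => h3 j, Finset.sum_add_distrib,
            Finset.sum_sub_distrib, h1, ← h2, Fin.sum_univ_castSucc (n := n) (f := fun j =>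
              (if j = Fin.last n then 0 else ε) * _), Finset.mul_sum]
          simp [(Fin.castSucc_lt_last _).ne]

lemma majPsi_ne_top (n : ℕ) (ξ : Fin (n + 1) → ℝ) : majPsi n ξ ≠ ⊤ := by
  obtain ⟨C, hC, h⟩ := exists_majPsi_le n (fun _ => 1) fun _ => one_pos
  exact ne_top_of_le_ne_top (ENNReal.mul_ne_top hC ENNReal.ofReal_ne_top) (h ξ)

lemma integral_fin_one (f : ℝ → ℂ) : ∫ ξ : Fin 1 → ℝ, f (ξ 0) = ∫ x, f x :=
  (volume_preserving_funUnique (Fin 1) ℝ).integral_comp' f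

lemma lintegral_fin_one (f : ℝ → ENNReal) : ∫⁻ ξ : Fin 1 → ℝ, f (ξ 0) = ∫⁻ x, f x :=
  (volume_preserving_funUnique (Fin 1) ℝ).lintegral_comp_emb
    (MeasurableEquiv.measurableEmbedding _) f

lemma baxter_lintegral (n : ℕ) {σ : ℝ} (hσ : 0 < σ) (ω : Fin (n + 1) → ℝ) :
    ∫⁻ ξ : Fin (n + 1) → ℝ,
        ENNReal.ofReal (Real.exp (σ * (∑ j, ξ j - ∑ j, ω j) - kerQ ξ ω)) * majPsi n ξ =
      ENNReal.ofReal (Real.Gamma σ) ^ (n + 1) * majPsi n ω := by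
  induction n with
  | zero =>
    simp only [majPsi, mul_one, kerQ, Fin.sum_univ_succ, Finset.univ_eq_empty, Finset.sum_empty,
      add_zero, zero_add, pow_one]
    rw [lintegral_fin_one (fun x => ENNReal.ofReal (Real.exp (σ * (x - ω 0) - Real.exp (x - ω 0)))),
      lintegral_sub_right_eq_self (fun x => ENNReal.ofReal (Real.exp (σ * x - Real.exp x))),
      lintegral_exp_mul_sub_exp hσ]
  | succ n ih =>
    calc _ = ∫⁻ ξ : Fin (n + 2) → ℝ, ∫⁻ ζ : Fin (n + 1) → ℝ,
          ENNReal.ofReal (Real.exp (σ * (∑ j, ξ j - ∑ j, ω j) - (kerQ ξ ω + kerL ξ ζ))) *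
            majPsi n ζ := by
          refine lintegral_congr fun ξ => ?_
          rw [majPsi, ← lintegral_const_mul' _ _ ENNReal.ofReal_ne_top]
          refine lintegral_congr fun ζ => ?_
          rw [← mul_assoc, ← ENNReal.ofReal_mul (Real.exp_nonneg _), ← Real.exp_add]
          congr 3
          ring
      _ = ∫⁻ ζ : Fin (n + 1) → ℝ, ∫⁻ ξ : Fin (n + 2) → ℝ,
          ENNReal.ofReal (Real.exp (σ * (∑ j, ξ j - ∑ j, ω j) - (kerQ ξ ω + kerL ξ ζ))) *
            majPsi n ζ := by
          apply lintegral_lintegral_swap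
          fun_prop
      _ = ∫⁻ ζ : Fin (n + 1) → ℝ, ∫⁻ θ : Fin (n + 1) → ℝ, ENNReal.ofReal (Real.Gamma σ) *
          (ENNReal.ofReal (Real.exp (σ * (∑ j, ζ j - ∑ j, θ j) - (kerL ω θ + kerQ ζ θ))) *
            majPsi n ζ) := by
          refine lintegral_congr fun ζ => ?_
          rw [lintegral_mul_const' _ _ (majPsi_ne_top n ζ), exchange_lintegral hσ,
            lintegral_const_mul' _ _ ENNReal.ofReal_ne_top,
            lintegral_mul_const' _ _ (majPsi_ne_top n ζ), mul_assoc]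
      _ = ∫⁻ θ : Fin (n + 1) → ℝ, ∫⁻ ζ : Fin (n + 1) → ℝ, ENNReal.ofReal (Real.Gamma σ) *
          (ENNReal.ofReal (Real.exp (σ * (∑ j, ζ j - ∑ j, θ j) - (kerL ω θ + kerQ ζ θ))) *
            majPsi n ζ) := by
          apply lintegral_lintegral_swap
          fun_prop
      _ = ∫⁻ θ : Fin (n + 1) → ℝ, ENNReal.ofReal (Real.Gamma σ) ^ (n + 2) *
          (ENNReal.ofReal (Real.exp (-kerL ω θ)) * majPsi n θ) := by
          refine lintegral_congr fun θ => ?_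
          rw [lintegral_const_mul' _ _ ENNReal.ofReal_ne_top, pow_succ', mul_assoc,
            mul_left_comm (_ ^ (n + 1)), ← ih θ,
            ← lintegral_const_mul' (ENNReal.ofReal (Real.exp (-kerL ω θ))) _
              ENNReal.ofReal_ne_top]
          congr 1
          refine lintegral_congr fun ζ => ?_
          rw [← mul_assoc, ← ENNReal.ofReal_mul (Real.exp_nonneg _), ← Real.exp_add]
          congr 3
          ring
      _ = _ := by
          rw [lintegral_const_mul' _ _ (by finiteness), majPsi]

lemma baxter_integral (n : ℕ) {c : ℂ} (hc : 0 < c.re) (a : ℕ → ℂ)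
    (ha : ∀ j < n + 1, (a j).re = 0) (ω : Fin (n + 1) → ℝ) :
    ∫ ξ : Fin (n + 1) → ℝ,
        cexp (c * ((∑ j, ξ j - ∑ j, ω j : ℝ) : ℂ) - ((kerQ ξ ω : ℝ) : ℂ)) * Psi n a ξ =
      (∏ j ∈ Finset.range (n + 1), Complex.Gamma (c + a j)) * Psi n a ω := by
  induction n generalizing a with
  | zero =>
    have hca : 0 < (c + a 0).re := by simpa [ha 0] using hc
    simp only [Psi, kerQ, Fin.sum_univ_succ, Finset.univ_eq_empty, Finset.sum_empty, add_zero,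
      zero_add, Finset.range_one, Finset.prod_singleton]
    rw [integral_fin_one (fun x => cexp (c * ((x - ω 0 : ℝ) : ℂ) - ((Real.exp (x - ω 0) : ℝ) : ℂ)) *
      cexp (a 0 * (x : ℂ))), ← integral_cexp_mul_sub_exp hca, ← integral_mul_const,
      ← integral_sub_right_eq_self
        (fun x : ℝ => cexp ((c + a 0) * x - Real.exp x) * cexp (a 0 * (ω 0 : ℝ))) (ω 0)]
    congr with x
    rw [← Complex.exp_add, ← Complex.exp_add]
    congr 1
    push_cast
    ring
  | succ n ih =>
    have ha' : ∀ j < n + 1, (a (j + 1)).re = 0 := fun j hj => ha (j + 1) (by omega)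
    have hca : 0 < (c + a 0).re := by simpa [ha 0] using hc
    have htop : ENNReal.ofReal (Real.Gamma c.re) ^ (n + 2) * majPsi (n + 1) ω < ⊤ :=
      ENNReal.mul_lt_top (by finiteness) (majPsi_ne_top _ _).lt_top
    let F : (Fin (n + 2) → ℝ) → (Fin (n + 1) → ℝ) → ℂ := fun ξ ζ =>
      cexp (c * ((∑ j, ξ j - ∑ j, ω j : ℝ) : ℂ) + a 0 * ((∑ j, ξ j - ∑ j, ζ j : ℝ) : ℂ) -
        ((kerQ ξ ω + kerL ξ ζ : ℝ) : ℂ)) * Psi n (fun j => a (j + 1)) ζ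
    let G : (Fin (n + 1) → ℝ) → (Fin (n + 1) → ℝ) → ℂ := fun θ ζ =>
      cexp (a 0 * ((∑ j, ω j - ∑ j, θ j : ℝ) : ℂ) + c * ((∑ j, ζ j - ∑ j, θ j : ℝ) : ℂ) -
        ((kerL ω θ + kerQ ζ θ : ℝ) : ℂ)) * Psi n (fun j => a (j + 1)) ζ
    have hF : Integrable (Function.uncurry F) (volume.prod volume) := by
      have hm : Measurable (Function.uncurry F) := by
        refine Measurable.mul ?_ ((measurable_Psi _ _).comp measurable_snd)
        exact Continuous.measurable (by fun_prop)
      refine ⟨hm.aestronglyMeasurable, ?_⟩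
      rw [hasFiniteIntegral_iff_enorm, lintegral_prod _ hm.enorm.aemeasurable]
      refine lt_of_le_of_lt ?_ htop
      rw [← baxter_lintegral (n + 1) hc ω]
      refine lintegral_mono fun ξ => ?_
      rw [majPsi, ← lintegral_const_mul' _ _ ENNReal.ofReal_ne_top]
      refine lintegral_mono fun ζ => ?_
      simp only [Function.uncurry, F]
      rw [enorm_mul, enorm_cexp, ← mul_assoc, ← ENNReal.ofReal_mul (Real.exp_nonneg _),
        ← Real.exp_add]
      refine mul_le_mul' (le_of_eq ?_) (enorm_Psi_le _ _ ha' _)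
      congr 2
      rw [sub_re, add_re, re_mul_ofReal, re_mul_ofReal, ofReal_re, ha 0 (by omega)]
      ring
    have hG : Integrable (Function.uncurry G) (volume.prod volume) := by
      have hm : Measurable (Function.uncurry G) := by
        refine Measurable.mul ?_ ((measurable_Psi _ _).comp measurable_snd)
        exact Continuous.measurable (by fun_prop)
      refine ⟨hm.aestronglyMeasurable, ?_⟩
      have htop' : ENNReal.ofReal (Real.Gamma c.re) ^ (n + 1) * majPsi (n + 1) ω < ⊤ :=
        ENNReal.mul_lt_top (by finiteness) (majPsi_ne_top _ _).lt_top
      rw [hasFiniteIntegral_iff_enorm, lintegral_prod _ hm.enorm.aemeasurable]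
      refine lt_of_le_of_lt ?_ htop'
      rw [majPsi, ← lintegral_const_mul' _ _ (by finiteness)]
      refine lintegral_mono fun θ => ?_
      dsimp only
      rw [mul_left_comm, ← baxter_lintegral n hc θ, ← lintegral_const_mul' _ _ ENNReal.ofReal_ne_top]
      refine lintegral_mono fun ζ => ?_
      simp only [Function.uncurry, G]
      rw [enorm_mul, enorm_cexp, ← mul_assoc, ← ENNReal.ofReal_mul (Real.exp_nonneg _),
        ← Real.exp_add]
      refine mul_le_mul' (le_of_eq ?_) (enorm_Psi_le _ _ ha' _)
      congr 2
      rw [sub_re, add_re, re_mul_ofReal, re_mul_ofReal, ofReal_re, ha 0 (by omega)]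
      ring
    calc _ = ∫ ξ, ∫ ζ, F ξ ζ := by
          congr with ξ
          rw [Psi, ← integral_const_mul]
          congr with ζ
          simp only [F]
          rw [← mul_assoc, ← Complex.exp_add]
          congr 2
          push_cast
          ring
      _ = ∫ ζ, ∫ ξ, F ξ ζ := integral_integral_swap hF
      _ = ∫ ζ, Complex.Gamma (c + a 0) * ∫ θ, G θ ζ := by
          congr with ζ
          simp only [F, G]
          rw [integral_mul_const, exchange_integral hca, integral_mul_const, mul_assoc]
      _ = Complex.Gamma (c + a 0) * ∫ θ, ∫ ζ, G θ ζ := by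
          rw [integral_const_mul, integral_integral_swap hG]
      _ = _ := by
          rw [Finset.prod_range_succ', mul_comm _ (Complex.Gamma (c + a 0)), mul_assoc, Psi]
          congr 1
          rw [← integral_const_mul]
          congr with θ
          rw [mul_left_comm, ← ih _ ha', ← integral_const_mul]
          congr with ζ
          simp only [G]
          rw [← mul_assoc, ← Complex.exp_add]
          congr 2
          push_cast
          ring

lemma besselK_eq (ν : ℂ) (y : ℝ) : BesselK ν y =
    (1 / 2) * ∫ x : ℝ, cexp (ν * x - (y / 2 * (Real.exp x + Real.exp (-x)) : ℝ)) := by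
  have h := integral_image_eq_integral_abs_deriv_smul MeasurableSet.univ
    (fun x _ => (Real.hasDerivAt_exp x).hasDerivWithinAt) Real.exp_injective.injOn
    (fun t : ℝ => cexp (-((y : ℂ) / 2) * ((t : ℂ) + 1 / (t : ℂ))) * (t : ℂ) ^ ν / (t : ℂ))
  rw [Set.image_univ, Real.range_exp, setIntegral_univ] at h
  rw [BesselK, h]
  congr 2 with x
  have hx : (Real.exp x : ℂ) ≠ 0 := by simp
  rw [abs_of_pos (Real.exp_pos x), real_smul, mul_div_cancel₀ _ hx, cpow_def_of_ne_zero hx,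
    ← ofReal_log (Real.exp_pos x).le, Real.log_exp, ← Complex.exp_add]
  congr 1
  rw [Real.exp_neg]
  push_cast
  ring

lemma ofReal_exp_cpow (x : ℝ) (z : ℂ) : ((Real.exp x : ℝ) : ℂ) ^ z = cexp (x * z) := by
  rw [cpow_def_of_ne_zero (by simp), ← ofReal_log (Real.exp_pos x).le, Real.log_exp]

lemma pi_cpow (z : ℂ) : (Real.pi : ℂ) ^ z = cexp (Real.log Real.pi * z) := by
  rw [← ofReal_exp_cpow, Real.exp_log Real.pi_pos]

@[simp]
lemma extR_val {k : ℕ} (t : Fin k → ℝ) (j : Fin k) : extR t j = t j := by simp [extR]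

lemma Psi_add_const (n : ℕ) (a : ℕ → ℂ) (c : ℂ) (ξ : Fin (n + 1) → ℝ) :
    Psi n (fun j => a j + c) ξ = cexp (c * ((∑ j, ξ j : ℝ) : ℂ)) * Psi n a ξ := by
  induction n generalizing a with
  | zero =>
    simp only [Psi, Fin.sum_univ_succ, Finset.univ_eq_empty, Finset.sum_empty, add_zero]
    rw [← Complex.exp_add]
    congr 1
    ring
  | succ n ih =>
    rw [Psi, Psi, ← integral_const_mul]
    congr with ω
    rw [ih (fun j => a (j + 1)), ← mul_assoc, ← mul_assoc, ← Complex.exp_add, ← Complex.exp_add]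
    congr 2
    push_cast
    ring

lemma sum_mul_sub_succ (M : ℕ) (X : ℕ → ℝ) :
    ∑ j ∈ Finset.range M, ((M - j : ℕ) : ℝ) * (X j - X (j + 1)) =
      (M + 1) * X 0 - ∑ j ∈ Finset.range (M + 1), X j := by
  induction M with
  | zero => simp
  | succ M ih =>
    have h : ∀ j ∈ Finset.range (M + 1), ((M + 1 - j : ℕ) : ℝ) * (X j - X (j + 1)) =
        ((M - j : ℕ) : ℝ) * (X j - X (j + 1)) + (X j - X (j + 1)) := fun j hj => by
      rw [Nat.succ_sub (Nat.lt_succ_iff.1 (Finset.mem_range.1 hj))]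
      push_cast
      ring
    rw [Finset.sum_congr rfl h, Finset.sum_add_distrib, Finset.sum_range_sub',
      Finset.sum_range_succ, ih, Finset.sum_range_succ _ (M + 1)]
    push_cast
    simp
    ring

lemma sumA_tildeA (m : ℕ) (a : ℕ → ℂ) : sumA (m + 2) (tildeA (m + 3) a) = sumA (m + 3) a := by
  have h : ((m : ℂ) + 2) ≠ 0 := by exact_mod_cast (by omega : m + 2 ≠ 0)
  have h' : ((m : ℂ) + 3 - 1) = m + 2 := by ring
  simp only [sumA, tildeA, Finset.sum_add_distrib, Finset.sum_const, Finset.card_range]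
  rw [Finset.sum_range_succ' a (m + 2)]
  push_cast
  rw [h', nsmul_eq_mul]
  push_cast
  field_simp

/-- The coordinates `y_j = π⁻¹ (x_j / x_{j+1})^{1/2}` with `x = exp X`. -/
def rootCoord (X : ℕ → ℝ) (j : ℕ) : ℝ := Real.exp ((X j - X (j + 1)) / 2) / Real.pi

lemma pi_mul_rootCoord (X : ℕ → ℝ) (j : ℕ) :
    Real.pi * rootCoord X j = Real.exp ((X j - X (j + 1)) / 2) := by
  rw [rootCoord, mul_div_cancel₀ _ Real.pi_ne_zero]

lemma rootCoord_cpow (X : ℕ → ℝ) (j : ℕ) (z : ℂ) : ((rootCoord X j : ℝ) : ℂ) ^ z =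
    cexp (((X j - X (j + 1)) / 2 - Real.log Real.pi : ℝ) * z) := by
  rw [← ofReal_exp_cpow, Real.exp_sub, Real.exp_log Real.pi_pos, rootCoord]

lemma whittAr_two (a : ℕ → ℂ) (X : ℕ → ℝ) :
    WhittAr 2 a (rootCoord X) * cexp (sumA 2 a / 2 * X 1) =
      cexp (Real.log Real.pi * (-(sumA 2 a / 2))) *
        Psi 1 (fun j => a j / 2) (fun j => X j) := by
  simp only [WhittAr, besselK_eq, mul_assoc 2 Real.pi, pi_mul_rootCoord, Psi, kerL,
    Fin.sum_univ_succ, Finset.univ_eq_empty, Finset.sum_empty, add_zero, rootCoord_cpow]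
  rw [integral_fin_one (fun x => cexp (a 0 / 2 * ((X (0 : Fin 2) + X (Fin.succ (0 : Fin 1)) - x : ℝ) : ℂ) -
    ((Real.exp (X (Fin.castSucc (0 : Fin 1)) - x) + Real.exp (x - X (Fin.succ (0 : Fin 1))) : ℝ) : ℂ)) *
      cexp (a (0 + 1) / 2 * (x : ℂ))), ← integral_const_mul, 
    ← integral_sub_left_eq_self (fun x : ℝ => cexp _ * _) volume ((X 0 + X 1) / 2),
    ← integral_const_mul, ← integral_const_mul, ← integral_mul_const]
  congr with x
  simp only [Fin.val_succ, Fin.val_castSucc, Fin.val_zero, zero_add]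
  have e1 : X 0 - ((X 0 + X 1) / 2 - x) = (X 0 - X 1) / 2 + x := by ring
  have e2 : (X 0 + X 1) / 2 - x - X 1 = (X 0 - X 1) / 2 + -x := by ring
  rw [e1, e2, Real.exp_add, Real.exp_add]
  rw [show ∀ A B C : ℂ, 2 * A * (1 / 2 * B) * C = A * B * C by intros; ring]
  simp only [← Complex.exp_add]
  congr 1
  simp only [sumA, Finset.sum_range_succ, Finset.range_zero, Finset.sum_empty]
  push_cast
  ring

lemma whittAr_kernel (m : ℕ) (a₀ : ℂ) (X : ℕ → ℝ) (ω : Fin (m + 2) → ℝ) :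
    ∏ j ∈ Finset.range (m + 2),
      (cexp (((-(Real.pi * rootCoord X j) ^ 2 * extR (expPi ((fun j : Fin (m + 2) => X (j + 1)) - ω)) j -
            1 / extR (expPi ((fun j : Fin (m + 2) => X (j + 1)) - ω)) j : ℝ) : ℂ)) *
        ((Real.pi * rootCoord X j : ℝ) : ℂ) ^ ((((m + 2 - j : ℕ) : ℂ) * a₀) / ((m + 2 : ℕ) : ℂ)) *
        ((extR (expPi ((fun j : Fin (m + 2) => X (j + 1)) - ω)) j : ℝ) : ℂ) ^
          ((((m + 3 : ℕ) : ℂ) * a₀) / (2 * ((m + 2 : ℕ) : ℂ)))) =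
      cexp (a₀ / 2 * ((∑ j : Fin (m + 3), X j - ∑ j, ω j : ℝ) : ℂ) -
        a₀ / 2 / ((m + 2 : ℕ) : ℂ) * ((∑ j, ω j : ℝ) : ℂ) -
        ((kerL (fun j : Fin (m + 3) => X j) ω : ℝ) : ℂ)) := by
  have hfac : ∀ j : Fin (m + 2),
      (cexp (((-(Real.pi * rootCoord X j) ^ 2 * extR (expPi ((fun j : Fin (m + 2) => X (j + 1)) - ω)) j -
            1 / extR (expPi ((fun j : Fin (m + 2) => X (j + 1)) - ω)) j : ℝ) : ℂ)) *
        ((Real.pi * rootCoord X j : ℝ) : ℂ) ^ ((((m + 2 - j : ℕ) : ℂ) * a₀) / ((m + 2 : ℕ) : ℂ)) *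
        ((extR (expPi ((fun j : Fin (m + 2) => X (j + 1)) - ω)) j : ℝ) : ℂ) ^
          ((((m + 3 : ℕ) : ℂ) * a₀) / (2 * ((m + 2 : ℕ) : ℂ)))) =
      cexp (a₀ / (2 * ((m + 2 : ℕ) : ℂ)) * (((m + 2 - j : ℕ) : ℝ) * (X j - X (j + 1)) : ℝ) +
        ((m + 3 : ℕ) : ℂ) * a₀ / (2 * ((m + 2 : ℕ) : ℂ)) * (X (j + 1) - ω j : ℝ) -
        (Real.exp (X j - ω j) + Real.exp (ω j - X (j + 1)) : ℝ)) := fun j => by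
    rw [extR_val, pi_mul_rootCoord, expPi, Pi.sub_apply, ofReal_exp_cpow, ofReal_exp_cpow, ← Complex.exp_add,
      ← Complex.exp_add, ← Real.exp_nat_mul, one_div, ← Real.exp_neg, neg_mul, ← Real.exp_add,
      show ((2 : ℕ) : ℝ) * ((X j - X (j + 1)) / 2) + (X (j + 1) - ω j) = X j - ω j by
        push_cast; ring,
      show -(X (j + 1) - ω j) = ω j - X (j + 1) by ring]
    congr 1
    push_cast
    field_simp
    ring
  have hS := sum_mul_sub_succ (m + 2) X
  have hX := Finset.sum_range_succ' X (m + 2)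
  rw [Finset.sum_range] at hS
  rw [Finset.sum_range, Finset.sum_range] at hX
  rw [Finset.sum_range] at hS
  have hm : ((m : ℂ) + 2) ≠ 0 := by exact_mod_cast (by omega : m + 2 ≠ 0)
  rw [Finset.prod_range, Finset.prod_congr rfl fun j _ => hfac j, ← Complex.exp_sum]
  congr 1
  simp only [Finset.sum_sub_distrib, Finset.sum_add_distrib, ← Finset.mul_sum, ← ofReal_sum]
  rw [hS]
  have hX' : ∑ j : Fin (m + 2), X (j + 1) = ∑ j : Fin (m + 3), X j - X 0 := by rw [hX]; ring
  rw [hX', kerL, Finset.sum_add_distrib]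
  simp only [Fin.val_succ, Fin.val_castSucc]
  push_cast
  field_simp
  ring

lemma whittAr_eq (m : ℕ) (a : ℕ → ℂ) (X : ℕ → ℝ) :
    WhittAr (m + 2) a (rootCoord X) * cexp (sumA (m + 2) a / 2 * X (m + 1)) =
      cexp (Real.log Real.pi * (-((m + 1 : ℕ) * sumA (m + 2) a / 2))) *
        Psi (m + 1) (fun j => a j / 2) (fun j => X j) := by
  induction m generalizing a X with
  | zero => simpa using whittAr_two a X
  | succ m ih =>
    rw [WhittAr, setIntegral_posSet, Psi, ← integral_const_mul, ← integral_mul_const,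
      ← integral_sub_left_eq_self _ volume (fun j : Fin (m + 2) => X (j + 1))]
    congr with ω
    let t : Fin (m + 2) → ℝ := expPi ((fun j : Fin (m + 2) => X (j + 1)) - ω)
    let τ : ℕ → ℝ := extR0 fun j : Fin (m + 2) => X (j + 1) - ω j
    have hτ : ∀ j, extR t j = Real.exp (τ j) := fun j => by
      by_cases h : j < m + 2 <;> simp [extR, extR0, t, τ, h, expPi, Pi.sub_apply]
    have hin : (fun j => rootCoord X (j + 1) * Real.sqrt (extR t (j + 1) / extR t j)) =
        rootCoord fun j => X (j + 1) - τ j := by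
      ext j
      rw [hτ, hτ, ← Real.exp_sub, ← Real.exp_half, rootCoord, rootCoord, div_mul_eq_mul_div,
        ← Real.exp_add]
      congr 2
      ring
    have hX' : ∀ j : Fin (m + 2), X (j + 1) - τ j = ω j := fun j => by simp [τ, extR0]
    have hlast : X (m + 1 + 1) - τ (m + 1) = ω (Fin.last _) := hX' (Fin.last _)
    have key := ih (tildeA (m + 3) a) fun j => X (j + 1) - τ j
    rw [← hin, sumA_tildeA, hlast] at key
    simp only [hX'] at key
    have hP : (∏ j ∈ Finset.range (m + 2), ((extR t j : ℝ) : ℂ)) =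
        ((∏ j : Fin (m + 2), Real.exp (X (j + 1) - ω j) : ℝ) : ℂ) := by
      rw [Finset.prod_range, ofReal_prod]
      exact Finset.prod_congr rfl fun j _ => by rw [extR_val]; rfl
    have hP0 : ((∏ j : Fin (m + 2), Real.exp (X (j + 1) - ω j) : ℝ) : ℂ) ≠ 0 :=
      ofReal_ne_zero.2 (by positivity)
    have hT : Real.pi * extR t (m + 1) =
        Real.exp (Real.log Real.pi + X (m + 2) - ω (Fin.last _)) := by
      have : τ (m + 1) = X (m + 2) - ω (Fin.last _) := by linarith
      rw [hτ, this, add_sub_assoc, Real.exp_add, Real.exp_log Real.pi_pos]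
    have hPsi : Psi (m + 1) (fun j => tildeA (m + 3) a j / 2) ω =
        cexp (a 0 / 2 / ((m + 2 : ℕ) : ℂ) * ((∑ j, ω j : ℝ) : ℂ)) *
          Psi (m + 1) (fun j => a (j + 1) / 2) ω := by
      rw [← Psi_add_const]
      congr 1
      ext j
      simp only [tildeA]
      push_cast
      ring
    rw [← eq_mul_inv_iff_mul_eq₀ (Complex.exp_ne_zero _), ← Complex.exp_neg, hPsi] at key
    change ((∏ j : Fin (m + 2), Real.exp (X (j + 1) - ω j) : ℝ) : ℂ) *
      (WhittAr (m + 2) (tildeA (m + 3) a)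
        (fun j => rootCoord X (j + 1) * Real.sqrt (extR t (j + 1) / extR t j)) * _ *
        ((Real.pi * extR t (m + 1) : ℝ) : ℂ) ^ (-(sumA (m + 3) a) / 2) *
        (∏ j ∈ Finset.range (m + 2), ((extR t j : ℝ) : ℂ))⁻¹) * _ = _
    rw [whittAr_kernel, hP, hT, ofReal_exp_cpow, key]
    rw [show ∀ P A B S C D F G : ℂ, P * (A * (B * S) * C * D * F * P⁻¹) * G = P * P⁻¹ *
      (A * B * C * D * F * G * S) by intros; ring, mul_inv_cancel₀ hP0, one_mul, ← mul_assoc]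
    simp only [← Complex.exp_add]
    congr 2
    push_cast
    ring

lemma extR_val_castSucc {k : ℕ} (t : Fin (k + 1) → ℝ) (j : Fin k) :
    extR t j = t j.castSucc := extR_val t j.castSucc

lemma extR_val_succ {k : ℕ} (t : Fin (k + 1) → ℝ) (j : Fin k) :
    extR t (j + 1) = t j.succ := extR_val t j.succ

@[simp]
lemma extR0_val {k : ℕ} (t : Fin k → ℝ) (j : Fin k) : extR0 t j = t j := by simp [extR0]

lemma extR0_val_succ {k : ℕ} (t : Fin (k + 1) → ℝ) (j : Fin k) :
    extR0 t (j + 1) = t j.succ := extR0_val t j.succ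

@[simp]
lemma extR0_self {k : ℕ} (t : Fin k → ℝ) : extR0 t k = 0 := by simp [extR0]

/-- The class one `SO_{2n+1}(ℝ)` Whittaker function in logarithmic coordinates. -/
def whittB (n : ℕ) (b : ℕ → ℂ) (ξ : Fin n → ℝ) : ℂ := WhittBr n b (rootCoord (extR0 ξ))

lemma whittBr_congr (n : ℕ) (b : ℕ → ℂ) {y y' : ℕ → ℝ} (h : ∀ j < n, y j = y' j) :
    WhittBr n b y = WhittBr n b y' := by
  match n with
  | 0 => rfl
  | 1 => simp only [WhittBr, h 0 one_pos]
  | n + 2 =>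
    simp only [WhittBr]
    refine integral_congr_ae (Filter.Eventually.of_forall fun p => ?_)
    dsimp only
    congr 3
    congr 1
    · congr 1
      · congr 1
        ext j
        split_ifs with hj
        · rw [h (j + 1) (by omega)]
        · rw [h (n + 1) (by omega)]
      · exact Finset.prod_congr rfl fun j hj => by rw [h j (Finset.mem_range.1 hj)]
    · refine Finset.prod_congr rfl fun j hj => ?_
      rw [h j (by have := Finset.mem_range.1 hj; omega)]

/-- The shear `(ω, ν) ↦ (ω - ξ, tail ω - ν)`. -/
def shearEquiv {n : ℕ} (ξ : Fin (n + 1) → ℝ) :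
    (Fin (n + 1) → ℝ) × (Fin n → ℝ) ≃ᵐ (Fin (n + 1) → ℝ) × (Fin n → ℝ) where
  toFun p := (p.1 - ξ, Fin.tail p.1 - p.2)
  invFun p := (p.1 + ξ, Fin.tail (p.1 + ξ) - p.2)
  left_inv p := by simp
  right_inv p := by simp
  measurable_toFun := by
    change Measurable fun p : (Fin (n + 1) → ℝ) × (Fin n → ℝ) => (p.1 - ξ, Fin.tail p.1 - p.2)
    exact Continuous.measurable (by unfold Fin.tail; fun_prop)
  measurable_invFun := by
    change Measurable fun p : (Fin (n + 1) → ℝ) × (Fin n → ℝ) =>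
      (p.1 + ξ, Fin.tail (p.1 + ξ) - p.2)
    exact Continuous.measurable (by unfold Fin.tail; fun_prop)

lemma measurePreserving_shearEquiv {n : ℕ} (ξ : Fin (n + 1) → ℝ) :
    MeasurePreserving (shearEquiv ξ) := by
  refine (measurePreserving_sub_right volume ξ).skew_product (g := fun ω ν => Fin.tail ω - ν)
    (Continuous.measurable (by unfold Fin.tail; fun_prop)) (Filter.Eventually.of_forall fun ω => ?_)
  exact (Measure.measurePreserving_sub_left volume (Fin.tail ω)).map_eq

lemma whittB_kernel_left (n : ℕ) (β : ℂ) (ξ ω : Fin (n + 2) → ℝ) :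
    ∏ j ∈ Finset.range (n + 2),
      (cexp (((-(Real.pi * rootCoord (extR0 ξ) j) ^ 2 * extR (expPi (ω - ξ)) j -
          1 / extR (expPi (ω - ξ)) j : ℝ) : ℂ)) *
        ((Real.pi * rootCoord (extR0 ξ) j : ℝ) : ℂ) ^ β) =
      cexp (β / 2 * (ξ 0 : ℝ) - (kerQ ξ ω + Real.exp (ω (Fin.last _)) : ℝ)) := by
  have hfac : ∀ j : Fin (n + 2),
      cexp (((-(Real.pi * rootCoord (extR0 ξ) j) ^ 2 * extR (expPi (ω - ξ)) j -
          1 / extR (expPi (ω - ξ)) j : ℝ) : ℂ)) *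
        ((Real.pi * rootCoord (extR0 ξ) j : ℝ) : ℂ) ^ β =
      cexp (β / 2 * (extR0 ξ j - extR0 ξ (j + 1) : ℝ) -
        (Real.exp (ξ j - ω j) + Real.exp (ω j - extR0 ξ (j + 1)) : ℝ)) := fun j => by
    rw [extR_val, pi_mul_rootCoord, expPi, Pi.sub_apply, ofReal_exp_cpow, ← Complex.exp_add,
      ← Real.exp_nat_mul, one_div, ← Real.exp_neg, neg_mul, ← Real.exp_add, extR0_val,
      show ((2 : ℕ) : ℝ) * ((ξ j - extR0 ξ (j + 1)) / 2) + (ω j - ξ j) = ω j - extR0 ξ (j + 1) by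
        push_cast; ring, neg_sub]
    congr 1
    push_cast
    ring
  rw [Finset.prod_range, Finset.prod_congr rfl fun j _ => hfac j, ← Complex.exp_sum]
  simp only [Finset.sum_sub_distrib, ← Finset.mul_sum, ← ofReal_sum]
  have h : ∑ j : Fin (n + 2), (extR0 ξ j - extR0 ξ (j + 1)) = ξ 0 := by
    rw [← Finset.sum_range fun j => extR0 ξ j - extR0 ξ (j + 1), Finset.sum_range_sub', extR0_self,
      sub_zero]
    exact extR0_val ξ 0
  rw [← Finset.sum_sub_distrib, h, kerQ, Finset.sum_add_distrib,
    Fin.sum_univ_castSucc (f := fun j : Fin (n + 2) => Real.exp (ω j - extR0 ξ (j + 1)))]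
  simp only [Fin.val_castSucc, Fin.val_last, extR0_self, extR0_val_succ, sub_zero]
  congr 3
  ring

lemma whittB_kernel_right (n : ℕ) (β : ℂ) (ξ ω : Fin (n + 2) → ℝ) (ν : Fin (n + 1) → ℝ) :
    ∏ j ∈ Finset.range (n + 1),
      (cexp (((-(Real.pi * rootCoord (extR0 ξ) j) ^ 2 *
            (extR (expPi (ω - ξ)) j / extR (expPi (ω - ξ)) (j + 1)) *
              extR (expPi (Fin.tail ω - ν)) j -
          1 / extR (expPi (Fin.tail ω - ν)) j : ℝ) : ℂ)) *
        ((extR (expPi (ω - ξ)) (j + 1) * extR (expPi (Fin.tail ω - ν)) j : ℝ) : ℂ) ^ (β / 2)) =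
      cexp (β / 2 * (2 * (∑ j, ω j - ω 0) - (∑ j, ξ j - ξ 0) - ∑ j, ν j : ℝ) -
        (kerL ω ν : ℝ)) := by
  have hfac : ∀ j : Fin (n + 1),
      cexp (((-(Real.pi * rootCoord (extR0 ξ) j) ^ 2 *
            (extR (expPi (ω - ξ)) j / extR (expPi (ω - ξ)) (j + 1)) *
              extR (expPi (Fin.tail ω - ν)) j -
          1 / extR (expPi (Fin.tail ω - ν)) j : ℝ) : ℂ)) *
        ((extR (expPi (ω - ξ)) (j + 1) * extR (expPi (Fin.tail ω - ν)) j : ℝ) : ℂ) ^ (β / 2) =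
      cexp (β / 2 * (2 * ω j.succ - ξ j.succ - ν j : ℝ) -
        (Real.exp (ω j.castSucc - ν j) + Real.exp (ν j - ω j.succ) : ℝ)) := fun j => by
    rw [extR_val, extR_val_succ, extR_val_castSucc, pi_mul_rootCoord, extR0_val_succ,
      show extR0 ξ j = ξ j.castSucc from extR0_val ξ j.castSucc]
    simp only [expPi, Pi.sub_apply, Fin.tail]
    rw [← Real.exp_nat_mul, one_div, ← Real.exp_neg, neg_mul, neg_mul, ← Real.exp_sub,
      ← Real.exp_add, ← Real.exp_add, ← Real.exp_add, ofReal_exp_cpow, ← Complex.exp_add, neg_sub,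
      show ((2 : ℕ) : ℝ) * ((ξ j.castSucc - ξ j.succ) / 2) +
        (ω j.castSucc - ξ j.castSucc - (ω j.succ - ξ j.succ)) + (ω j.succ - ν j) =
        ω j.castSucc - ν j by push_cast; ring]
    congr 1
    push_cast
    ring
  rw [Finset.prod_range, Finset.prod_congr rfl fun j _ => hfac j, ← Complex.exp_sum]
  simp only [Finset.sum_sub_distrib, ← Finset.mul_sum, ← ofReal_sum]
  rw [Fin.sum_univ_succ (f := ω), Fin.sum_univ_succ (f := ξ), kerL]
  congr 3
  push_cast
  ring

lemma whittB_succ (n : ℕ) (b : ℕ → ℂ) (ξ : Fin (n + 2) → ℝ) :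
    whittB (n + 2) b ξ = ∫ p : (Fin (n + 2) → ℝ) × (Fin (n + 1) → ℝ),
      cexp (b (n + 1) / 2 * (2 * ∑ j, p.1 j - ∑ j, ξ j - ∑ j, p.2 j : ℝ) -
        (kerQ ξ p.1 + Real.exp (p.1 (Fin.last _)) + kerL p.1 p.2 : ℝ)) *
          whittB (n + 1) b p.2 := by
  rw [whittB, WhittBr, setIntegral_posSet_prod,
    ← (measurePreserving_shearEquiv ξ).integral_comp']
  congr with ⟨ω, ν⟩
  let t : Fin (n + 2) → ℝ := expPi (ω - ξ)
  let u : Fin (n + 1) → ℝ := expPi (Fin.tail ω - ν)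
  have hin : WhittBr (n + 1) b (fun j =>
      if j < n then rootCoord (extR0 ξ) (j + 1) *
        Real.sqrt (extR t (j + 1) * extR u (j + 1) / (extR t (j + 2) * extR u j))
      else rootCoord (extR0 ξ) (n + 1) * Real.sqrt (extR t (n + 1) / extR u n)) =
      whittB (n + 1) b ν := by
    refine whittBr_congr _ _ fun j hj => ?_
    split_ifs with h
    · lift j to Fin n using h
      rw [show extR t (j + 1) = t j.succ.castSucc from extR_val t j.succ.castSucc,
        show extR t (j + 2) = t j.succ.succ from extR_val t j.succ.succ,
        extR_val_succ, extR_val_castSucc, rootCoord, rootCoord,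
        show extR0 ξ (j + 1) = ξ j.succ.castSucc from extR0_val ξ j.succ.castSucc,
        show extR0 ξ (j + 1 + 1) = ξ j.succ.succ from extR0_val ξ j.succ.succ,
        extR0_val_succ, show extR0 ν j = ν j.castSucc from extR0_val ν j.castSucc]
      simp only [t, u, expPi, Pi.sub_apply, Fin.tail]
      rw [← Real.exp_add, ← Real.exp_add, ← Real.exp_sub, ← Real.exp_half, div_mul_eq_mul_div,
        ← Real.exp_add]
      congr 2
      simp only [Fin.succ_castSucc]
      ring
    · obtain rfl : j = n := by omega
      rw [show extR t (j + 1) = t (Fin.last _) from extR_val t (Fin.last _),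
        show extR u j = u (Fin.last _) from extR_val u (Fin.last _), rootCoord, rootCoord,
        extR0_self, extR0_self,
        show extR0 ξ (j + 1) = ξ (Fin.last _) from extR0_val ξ (Fin.last _),
        show extR0 ν j = ν (Fin.last _) from extR0_val ν (Fin.last _)]
      simp only [t, u, expPi, Pi.sub_apply, Fin.tail]
      rw [← Real.exp_sub, ← Real.exp_half, div_mul_eq_mul_div, ← Real.exp_add]
      congr 2
      simp only [Fin.succ_last]
      ring
  have hP : ∀ {k : ℕ} (τ : Fin k → ℝ), (∏ j ∈ Finset.range k, ((extR (expPi τ) j : ℝ) : ℂ)) =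
      ((∏ j, Real.exp (τ j) : ℝ) : ℂ) := fun τ => by
    rw [Finset.prod_range, ofReal_prod]
    exact Finset.prod_congr rfl fun j _ => by rw [extR_val, expPi]
  have hP0 : ∀ {k : ℕ} (τ : Fin k → ℝ), ((∏ j, Real.exp (τ j) : ℝ) : ℂ) ≠ 0 := fun τ =>
    ofReal_ne_zero.2 (by positivity)
  simp only [show shearEquiv ξ (ω, ν) = (ω - ξ, Fin.tail ω - ν) from rfl]
  change ((∏ j, Real.exp ((ω - ξ) j) : ℝ) : ℂ) * ((∏ j, Real.exp ((Fin.tail ω - ν) j) : ℝ) : ℂ) *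
    (WhittBr (n + 1) b (fun j =>
      if j < n then rootCoord (extR0 ξ) (j + 1) *
        Real.sqrt (extR t (j + 1) * extR u (j + 1) / (extR t (j + 2) * extR u j))
      else rootCoord (extR0 ξ) (n + 1) * Real.sqrt (extR t (n + 1) / extR u n)) * _ * _ *
    (extR (expPi (ω - ξ)) 0 : ℂ) ^ b (n + 1) *
    (∏ j ∈ Finset.range (n + 1), ((extR (expPi (Fin.tail ω - ν)) j : ℝ) : ℂ))⁻¹ *
    (∏ j ∈ Finset.range (n + 2), ((extR (expPi (ω - ξ)) j : ℝ) : ℂ))⁻¹) = _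
  rw [hin, whittB_kernel_left, whittB_kernel_right, hP, hP,
    show extR (expPi (ω - ξ)) 0 = Real.exp (ω 0 - ξ 0) from extR_val (expPi (ω - ξ)) 0,
    ofReal_exp_cpow]
  rw [show ∀ P Q S A B C : ℂ, P * Q * (S * A * B * C * Q⁻¹ * P⁻¹) = P * P⁻¹ * (Q * Q⁻¹) *
    (A * B * C * S) by intros; ring, mul_inv_cancel₀ (hP0 _), mul_inv_cancel₀ (hP0 _), one_mul,
    one_mul, ← Complex.exp_add, ← Complex.exp_add]
  congr 2
  push_cast
  ring

lemma kerQ_add_exp_last {n : ℕ} (ξ ω : Fin (n + 1) → ℝ) :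
    kerQ ξ ω + Real.exp (ω (Fin.last n)) =
      ∑ j : Fin (n + 1), (Real.exp (ξ j - ω j) + Real.exp (ω j - extR0 ξ (j + 1))) := by
  rw [kerQ, Finset.sum_add_distrib,
    Fin.sum_univ_castSucc (f := fun j : Fin (n + 1) => Real.exp (ω j - extR0 ξ (j + 1)))]
  simp only [Fin.val_castSucc, Fin.val_last, extR0_self, extR0_val_succ, sub_zero]
  ring

lemma kerQ_snoc_zero {n : ℕ} (ω : Fin (n + 1) → ℝ) (ν : Fin n → ℝ) :
    kerQ ω (Fin.snoc ν 0) = Real.exp (ω (Fin.last n)) + kerL ω ν := by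
  rw [kerQ, Fin.sum_univ_castSucc, kerL, Finset.sum_add_distrib]
  simp only [Fin.snoc_castSucc, Fin.snoc_last, sub_zero]
  ring

lemma sum_snoc_zero {n : ℕ} (ν : Fin n → ℝ) :
    ∑ j, (Fin.snoc ν 0 : Fin (n + 1) → ℝ) j = ∑ j, ν j := by
  rw [Fin.sum_univ_castSucc]
  simp

lemma whittB_one (b : ℕ → ℂ) (ξ : Fin 1 → ℝ) :
    whittB 1 b ξ = ∫ x : ℝ, cexp (b 0 / 2 * x -
      (Real.exp (ξ 0 / 2 - x) + Real.exp (x - -(ξ 0 / 2)) : ℝ)) := by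
  have h0 : extR0 ξ 0 = ξ 0 := extR0_val ξ 0
  rw [whittB, WhittBr, besselK_eq, mul_assoc 2 Real.pi, pi_mul_rootCoord, h0,
    show extR0 ξ (0 + 1) = 0 from extR0_self ξ, ← mul_assoc]
  norm_num
  congr with x
  rw [mul_add, ← Complex.exp_add, ← Complex.exp_add]
  congr 2
  ring_nf

lemma measurable_whittB (n : ℕ) (b : ℕ → ℂ) : Measurable (whittB (n + 1) b) := by
  induction n with
  | zero =>
    have h : StronglyMeasurable fun p : (Fin 1 → ℝ) × ℝ => cexp (b 0 / 2 * p.2 -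
        (Real.exp (p.1 0 / 2 - p.2) + Real.exp (p.2 - -(p.1 0 / 2)) : ℝ)) :=
      (Continuous.measurable (by fun_prop)).stronglyMeasurable
    rw [show whittB (0 + 1) b = _ from funext (whittB_one b)]
    exact h.integral_prod_right'.measurable
  | succ n ih =>
    have h : StronglyMeasurable
        fun q : (Fin (n + 2) → ℝ) × ((Fin (n + 2) → ℝ) × (Fin (n + 1) → ℝ)) =>
        cexp (b (n + 1) / 2 * (2 * ∑ j, q.2.1 j - ∑ j, q.1 j - ∑ j, q.2.2 j : ℝ) -
          (kerQ q.1 q.2.1 + Real.exp (q.2.1 (Fin.last _)) + kerL q.2.1 q.2.2 : ℝ)) *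
            whittB (n + 1) b q.2.2 := by
      refine Measurable.stronglyMeasurable
        (Measurable.mul ?_ (ih.comp (measurable_snd.comp measurable_snd)))
      exact Continuous.measurable (by fun_prop)
    rw [show whittB (n + 1 + 1) b = _ from funext (whittB_succ n b)]
    exact h.integral_prod_right'.measurable

lemma exists_whittB_le (n : ℕ) (b : ℕ → ℂ) (hb : ∀ k < n + 1, (b k).re = 0) {ε : ℝ}
    (hε : 0 < ε) : ∃ C : ENNReal, C ≠ ⊤ ∧ ∀ ξ : Fin (n + 1) → ℝ,
      ‖whittB (n + 1) b ξ‖ₑ ≤ C * ENNReal.ofReal (Real.exp (-(ε * ξ 0))) := by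
  induction n generalizing ε with
  | zero =>
    obtain ⟨C, hC, hle⟩ := exists_lintegral_bessel_le (δ := 0) hε hε
    refine ⟨C, hC, fun ξ => ?_⟩
    rw [whittB_one]
    refine (enorm_integral_le_lintegral_enorm _).trans ?_
    refine (lintegral_congr fun x => ?_).trans_le ((hle (ξ 0 / 2) (-(ξ 0 / 2))).trans_eq ?_)
    · rw [enorm_cexp]
      congr 2
      rw [sub_re, re_mul_ofReal, ofReal_re, Complex.div_ofNat_re, hb 0 one_pos]
      ring
    · congr 3
      ring
  | succ n ih =>
    obtain ⟨κ, hκ, rfl⟩ : ∃ κ, 0 < κ ∧ ε = κ + (κ + κ) := ⟨ε / 3, by positivity, by ring⟩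
    obtain ⟨C, hC, hCle⟩ := ih (fun k hk => hb k (by omega)) hκ
    let δ₁ : Fin (n + 1) → ℝ := fun j => if j = 0 then -κ else 0
    have hδ₁ : ∀ j, δ₁ j < κ := fun j => by simp only [δ₁]; split_ifs <;> linarith
    obtain ⟨D, hD, hDle⟩ := exists_lintegral_bessel_pi_le (fun _ : Fin (n + 1) => hκ) hδ₁
    let δ₂ : Fin (n + 2) → ℝ := fun j =>
      (if j = Fin.last _ then κ else 0) - if j = 0 then κ + κ else 0
    let κ₂ : Fin (n + 2) → ℝ := fun j => κ + if j = Fin.last _ then κ else 0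
    have hκ₂ : ∀ j, 0 < κ₂ j := fun j => by simp only [κ₂]; split_ifs <;> linarith
    have hδ₂ : ∀ j, δ₂ j < κ₂ j := fun j => by simp only [κ₂, δ₂]; split_ifs <;> linarith
    obtain ⟨E, hE, hEle⟩ := exists_lintegral_bessel_pi_le hκ₂ hδ₂
    have hinner : ∀ ω : Fin (n + 2) → ℝ, ∫⁻ ν : Fin (n + 1) → ℝ,
        ENNReal.ofReal (Real.exp (-(κ * ν 0) - kerL ω ν)) ≤
          D * ENNReal.ofReal (Real.exp (κ * ω (Fin.last _) - (κ + κ) * ω 0)) := fun ω => by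
      convert hDle (fun j => ω j.castSucc) (fun j => ω j.succ) using 2
      · ext ν
        congr 2
        simp only [kerL, δ₁, Finset.sum_sub_distrib, Finset.sum_add_distrib, ite_mul, zero_mul,
          Finset.sum_ite_eq', Finset.mem_univ, if_true]
        ring
      · congr 2
        have h := sum_succ_sub_castSucc ω
        have h' : ∀ j : Fin (n + 1), κ * ω j.succ + (δ₁ j - κ) * ω j.castSucc =
            κ * (ω j.succ - ω j.castSucc) + δ₁ j * ω j.castSucc := fun j => by ring
        rw [Finset.sum_congr rfl fun j _ => h' j, Finset.sum_add_distrib, ← Finset.mul_sum, h]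
        simp only [δ₁, ite_mul, zero_mul, Finset.sum_ite_eq', Finset.mem_univ, if_true,
          Fin.castSucc_zero]
        ring
    refine ⟨C * (D * E), by finiteness, fun ξ => ?_⟩
    calc ‖whittB (n + 2) b ξ‖ₑ ≤ ∫⁻ p : (Fin (n + 2) → ℝ) × (Fin (n + 1) → ℝ),
          ENNReal.ofReal (Real.exp (-(kerQ ξ p.1 + Real.exp (p.1 (Fin.last _)))
            - (κ * p.2 0 + kerL p.1 p.2))) * C := by
          rw [whittB_succ]
          refine (enorm_integral_le_lintegral_enorm _).trans (lintegral_mono fun p => ?_)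
          dsimp only
          rw [enorm_mul, enorm_cexp]
          refine (mul_le_mul_right (hCle p.2) _).trans (le_of_eq ?_)
          rw [mul_comm C, ← mul_assoc, ← ENNReal.ofReal_mul (Real.exp_nonneg _), ← Real.exp_add]
          congr 3
          rw [sub_re, re_mul_ofReal, ofReal_re, Complex.div_ofNat_re, hb (n + 1) (by omega)]
          ring
      _ = ∫⁻ ω : Fin (n + 2) → ℝ, ENNReal.ofReal
            (Real.exp (-(kerQ ξ ω + Real.exp (ω (Fin.last _))))) *
            (∫⁻ ν : Fin (n + 1) → ℝ, ENNReal.ofReal (Real.exp (-(κ * ν 0) - kerL ω ν))) * C := by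
          rw [Measure.volume_eq_prod, lintegral_prod _ (by fun_prop)]
          refine lintegral_congr fun ω => ?_
          rw [lintegral_mul_const' _ _ hC, ← lintegral_const_mul' _ _ ENNReal.ofReal_ne_top]
          congr 1
          refine lintegral_congr fun ν => ?_
          rw [← ENNReal.ofReal_mul (Real.exp_nonneg _), ← Real.exp_add]
          congr 2
          ring
      _ ≤ ∫⁻ ω : Fin (n + 2) → ℝ, ENNReal.ofReal (Real.exp (∑ j, (δ₂ j * ω j -
            Real.exp (ξ j - ω j) - Real.exp (ω j - extR0 ξ (j + 1))))) * (D * C) := by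
          refine lintegral_mono fun ω => ?_
          dsimp only
          rw [← mul_assoc]
          refine mul_le_mul_left ((mul_le_mul_right (hinner ω) _).trans (le_of_eq ?_)) _
          rw [mul_comm D, ← mul_assoc, ← ENNReal.ofReal_mul (Real.exp_nonneg _), ← Real.exp_add,
            kerQ_add_exp_last]
          congr 3
          simp only [Finset.sum_sub_distrib, Finset.sum_add_distrib, δ₂, sub_mul, ite_mul, zero_mul,
            Finset.sum_ite_eq', Finset.mem_univ, if_true]
          ring
      _ ≤ E * ENNReal.ofReal (Real.exp (∑ j, (κ₂ j * extR0 ξ (j + 1) + (δ₂ j - κ₂ j) * ξ j))) *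
            (D * C) := by
          rw [lintegral_mul_const' _ _ (by finiteness)]
          exact mul_le_mul_left (hEle ξ fun j => extR0 ξ (j + 1)) _
      _ = _ := by
          rw [show ∑ j, (κ₂ j * extR0 ξ (j + 1) + (δ₂ j - κ₂ j) * ξ j) =
            -((κ + (κ + κ)) * ξ 0) by
              have h : ∑ j : Fin (n + 2), (extR0 ξ j - extR0 ξ (j + 1)) = ξ 0 := by
                rw [← Finset.sum_range fun j => extR0 ξ j - extR0 ξ (j + 1),
                  Finset.sum_range_sub', extR0_self, sub_zero]
                exact extR0_val ξ 0
              have h' : ∀ j : Fin (n + 2), κ₂ j * extR0 ξ (j + 1) + (δ₂ j - κ₂ j) * ξ j =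
                  -(κ * (extR0 ξ j - extR0 ξ (j + 1))) +
                    ((if j = Fin.last _ then κ * extR0 ξ (j + 1) else 0) -
                      if j = 0 then (κ + κ) * ξ j else 0) := fun j => by
                simp only [κ₂, δ₂, extR0_val]
                split_ifs <;> ring
              rw [Finset.sum_congr rfl fun j _ => h' j, Finset.sum_add_distrib,
                Finset.sum_neg_distrib, ← Finset.mul_sum, h, Finset.sum_sub_distrib]
              simp only [Finset.sum_ite_eq', Finset.mem_univ, if_true, Fin.val_last, extR0_self]
              ring]
          ring

lemma lintegral_exp_neg_abs_lt_top {c : ℝ} (hc : 0 < c) :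
    ∫⁻ x : ℝ, ENNReal.ofReal (Real.exp (-(c * |x|))) < ⊤ := by
  rw [← setLIntegral_univ, ← Set.Iic_union_Ioi (a := (0 : ℝ)),
    lintegral_union measurableSet_Ioi (Set.Iic_disjoint_Ioi le_rfl)]
  refine ENNReal.add_lt_top.2 ⟨?_, ?_⟩
  · rw [setLIntegral_congr_fun (g := fun x => ENNReal.ofReal (Real.exp (c * x)))
      measurableSet_Iic fun x hx => by simp only; rw [abs_of_nonpos hx, mul_neg, neg_neg]]
    exact (integrableOn_exp_mul_Iic hc 0).lintegral_lt_top
  · rw [setLIntegral_congr_fun (g := fun x => ENNReal.ofReal (Real.exp (-c * x)))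
      measurableSet_Ioi fun x hx => by
        simp only; rw [abs_of_pos (Set.mem_Ioi.1 hx), neg_mul]]
    exact (exp_neg_integrableOn_Ioi 0 hc).lintegral_lt_top

lemma sum_eq_sum_mul_sub_succ (M : ℕ) (X : ℕ → ℝ) (hX : X M = 0) :
    ∑ j ∈ Finset.range M, X j = ∑ j ∈ Finset.range M, ((j : ℝ) + 1) * (X j - X (j + 1)) := by
  have h (M : ℕ) : ∑ j ∈ Finset.range M, ((j : ℝ) + 1) * (X j - X (j + 1)) =
      ∑ j ∈ Finset.range M, X j - M * X M := by
    induction M with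
    | zero => simp
    | succ M ih =>
      rw [Finset.sum_range_succ, ih, Finset.sum_range_succ]
      push_cast
      ring
  rw [h, hX, mul_zero, sub_zero]

lemma sum_abs_le_sum_abs_sub_succ {k : ℕ} (ν : Fin k → ℝ) :
    ∑ i, |ν i| ≤ k * ∑ j : Fin k, |extR0 ν j - extR0 ν (j + 1)| := by
  refine (Finset.sum_le_card_nsmul Finset.univ _
    (∑ j : Fin k, |extR0 ν j - extR0 ν (j + 1)|) fun i _ => ?_).trans_eq (by simp)
  have h := dist_le_Ico_sum_dist (extR0 ν) i.2.le
  rw [extR0_self, extR0_val, dist_zero_right, Real.norm_eq_abs] at h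
  refine h.trans ?_
  rw [← Finset.sum_range fun j => |extR0 ν j - extR0 ν (j + 1)|]
  refine Finset.sum_le_sum_of_subset_of_nonneg (fun j hj => ?_) fun _ _ _ => abs_nonneg _
  exact Finset.mem_range.2 (Finset.mem_Ico.1 hj).2

lemma snoc_zero_eq_extR0 {n : ℕ} (ν : Fin n → ℝ) (j : Fin (n + 1)) :
    (Fin.snoc ν 0 : Fin (n + 1) → ℝ) j = extR0 ν j := by
  induction j using Fin.lastCases with
  | last => rw [Fin.snoc_last, Fin.val_last, extR0_self]
  | cast j => rw [Fin.snoc_castSucc, Fin.val_castSucc, extR0_val]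

lemma lintegral_whittB_majPsi_lt_top (m : ℕ) (b : ℕ → ℂ) (hb : ∀ k < m + 1, (b k).re = 0)
    {σ : ℝ} (hσ : 0 < σ) :
    ∫⁻ ν : Fin (m + 1) → ℝ, ENNReal.ofReal (Real.exp (σ * ∑ j, ν j)) *
      (‖whittB (m + 1) b ν‖ₑ * majPsi (m + 1) (Fin.snoc ν 0)) < ⊤ := by
  classical
  obtain ⟨B, hB, hBle⟩ := exists_whittB_le m b hb (ε := σ / 4) (by positivity)
  let e : Finset (Fin (m + 1)) → Fin (m + 1) → ℝ := fun S j => if j ∈ S then σ * (m + 2) else σ / 4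
  have he : ∀ S j, 0 < e S j := fun S j => by
    simp only [e]
    split_ifs <;> positivity
  choose C hC hCle using fun S => exists_majPsi_le (m + 1) (e S) (he S)
  let c : ℝ := σ / (2 * (m + 1 : ℕ))
  have hc : 0 < c := by positivity
  have hexp : ∀ ν : Fin (m + 1) → ℝ, ∃ S, σ * ∑ j, ν j + (-(σ / 4 * ν 0) +
      ∑ j, e S j * ((Fin.snoc ν 0 : Fin (m + 2) → ℝ) j.succ -
        (Fin.snoc ν 0 : Fin (m + 2) → ℝ) j.castSucc)) ≤ ∑ j, -(c * |ν j|) := fun ν => by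
    let r : Fin (m + 1) → ℝ := fun j => extR0 ν j - extR0 ν (j + 1)
    refine ⟨Finset.univ.filter fun j => 0 ≤ r j, ?_⟩
    have h1 : ∑ j, ν j = ∑ j : Fin (m + 1), ((j : ℝ) + 1) * r j := by
      rw [← Finset.sum_range fun j => ((j : ℝ) + 1) * (extR0 ν j - extR0 ν (j + 1)),
        ← sum_eq_sum_mul_sub_succ _ _ (extR0_self ν), Finset.sum_range]
      simp only [extR0_val]
    have h2 : ν 0 = ∑ j, r j := by
      rw [← Finset.sum_range fun j => extR0 ν j - extR0 ν (j + 1), Finset.sum_range_sub',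
        extR0_self, sub_zero]
      exact (extR0_val ν 0).symm
    have h3 : -(σ / 2 * ∑ j, |r j|) ≤ ∑ j, -(c * |ν j|) := by
      rw [Finset.sum_neg_distrib, ← Finset.mul_sum, neg_le_neg_iff]
      refine (mul_le_mul_of_nonneg_left (sum_abs_le_sum_abs_sub_succ ν) hc.le).trans_eq ?_
      rw [← mul_assoc]
      congr 1
      simp only [c]
      field_simp
    refine le_trans ?_ h3
    rw [h1, h2, Finset.mul_sum, Finset.mul_sum, Finset.mul_sum, ← Finset.sum_neg_distrib,
      ← Finset.sum_neg_distrib, ← Finset.sum_add_distrib, ← Finset.sum_add_distrib]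
    refine Finset.sum_le_sum fun j _ => ?_
    rw [snoc_zero_eq_extR0, snoc_zero_eq_extR0, Fin.val_succ, Fin.val_castSucc,
      ← neg_sub (extR0 ν j), show extR0 ν j - extR0 ν (j + 1) = r j from rfl]
    have hj : (j : ℝ) ≤ m := by exact_mod_cast Nat.lt_succ_iff.1 j.2
    have hj0 : (0 : ℝ) ≤ j := by positivity
    simp only [e, Finset.mem_filter, Finset.mem_univ, true_and]
    split_ifs with hr
    · rw [abs_of_nonneg hr]
      nlinarith [mul_nonneg (mul_nonneg hσ.le hr) (sub_nonneg.2 hj), mul_nonneg hσ.le hr]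
    · have hr' : 0 < -r j := by linarith
      rw [abs_of_neg (not_le.1 hr)]
      nlinarith [mul_nonneg (mul_nonneg hσ.le hr'.le) hj0, mul_pos hσ hr']
  calc _ ≤ ∫⁻ ν : Fin (m + 1) → ℝ, (B * ∑ S, C S) *
        ∏ j, ENNReal.ofReal (Real.exp (-(c * |ν j|))) := by
        refine lintegral_mono fun ν => ?_
        dsimp only
        obtain ⟨S, hS⟩ := hexp ν
        have hCS : C S ≤ ∑ S, C S := Finset.single_le_sum (fun _ _ => zero_le) (Finset.mem_univ S)
        refine (mul_le_mul_right (mul_le_mul' (hBle ν)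
          ((hCle S _).trans (mul_le_mul_left hCS _))) _).trans ?_
        rw [mul_mul_mul_comm, mul_left_comm]
        refine mul_le_mul_right ?_ _
        rw [← ENNReal.ofReal_mul (Real.exp_nonneg _), ← Real.exp_add,
          ← ENNReal.ofReal_mul (Real.exp_nonneg _), ← Real.exp_add,
          ← ENNReal.ofReal_prod_of_nonneg fun _ _ => Real.exp_nonneg _, ← Real.exp_sum]
        exact ENNReal.ofReal_le_ofReal (Real.exp_le_exp.2 hS)
    _ = (B * ∑ S, C S) * ∏ _j : Fin (m + 1),
        ∫⁻ x : ℝ, ENNReal.ofReal (Real.exp (-(c * |x|))) := by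
        rw [lintegral_const_mul' _ _ (by
          refine ENNReal.mul_ne_top hB (ENNReal.sum_ne_top.2 fun S _ => hC S)),
          lintegral_fin_prod _ (fun _ x => ENNReal.ofReal (Real.exp (-(c * |x|))))
            fun _ => by fun_prop]
    _ < ⊤ := ENNReal.mul_lt_top
        (ENNReal.mul_lt_top hB.lt_top (ENNReal.sum_lt_top.2 fun S _ => (hC S).lt_top))
        (ENNReal.prod_lt_top fun _ _ => lintegral_exp_neg_abs_lt_top hc)

lemma integral_integral_eigenfunction {α γ : Type*} [MeasureSpace α] [MeasureSpace γ]
    [SFinite (volume : Measure α)] [SFinite (volume : Measure γ)]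
    {A : α → α → ℂ} {B : α → γ → ℂ} {ψ : α → ℂ} {φ w : γ → ℂ} {M : α → ENNReal} {N : γ → ENNReal}
    {P Q : ℂ} {p q : ENNReal} (hA : Measurable (Function.uncurry A))
    (hB : Measurable (Function.uncurry B)) (hψ : Measurable ψ) (hw : Measurable w)
    (hψM : ∀ ξ, ‖ψ ξ‖ₑ ≤ M ξ) (hM : Measurable M) (hp : p ≠ ⊤) (hq : q ≠ ⊤)
    (hAM : ∀ ω, ∫⁻ ξ, ‖A ξ ω‖ₑ * M ξ = p * M ω) (hBM : ∀ ν, ∫⁻ ω, ‖B ω ν‖ₑ * M ω = q * N ν)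
    (hN : ∫⁻ ν, N ν * ‖w ν‖ₑ < ⊤)
    (hAψ : ∀ ω, ∫ ξ, A ξ ω * ψ ξ = P * ψ ω) (hBψ : ∀ ν, ∫ ω, B ω ν * ψ ω = Q * φ ν) :
    ∫ ξ, ∫ x : α × γ, A ξ x.1 * ψ ξ * (B x.1 x.2 * w x.2) = P * Q * ∫ ν, φ ν * w ν := by
  let F : α × (α × γ) → ℂ := fun z => A z.1 z.2.1 * ψ z.1 * (B z.2.1 z.2.2 * w z.2.2)
  have hF : Measurable F :=
    ((hA.comp (measurable_fst.prodMk measurable_snd.fst)).mul (hψ.comp measurable_fst)).mul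
      ((hB.comp measurable_snd).mul (hw.comp measurable_snd.snd))
  have hG : Measurable fun x : α × γ => ‖B x.1 x.2‖ₑ * M x.1 * ‖w x.2‖ₑ :=
    (hB.enorm.mul (hM.comp measurable_fst)).mul (hw.comp measurable_snd).enorm
  have hfin : ∫⁻ z, ‖F z‖ₑ < ⊤ := by
    rw [Measure.volume_eq_prod, lintegral_prod_symm _ hF.enorm.aemeasurable]
    calc _ ≤ ∫⁻ x : α × γ, p * (‖B x.1 x.2‖ₑ * M x.1 * ‖w x.2‖ₑ) := by
          refine lintegral_mono fun x => ?_
          calc _ ≤ ∫⁻ ξ, ‖A ξ x.1‖ₑ * M ξ * (‖B x.1 x.2‖ₑ * ‖w x.2‖ₑ) := by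
                refine lintegral_mono fun ξ => ?_
                simp only [F, enorm_mul]
                exact mul_le_mul_left (mul_le_mul_right (hψM ξ) _) _
            _ = _ := by
                rw [lintegral_mul_const' _ _ (by finiteness), hAM]
                ring
      _ = p * ∫⁻ ν, ∫⁻ ω, ‖B ω ν‖ₑ * M ω * ‖w ν‖ₑ := by
          rw [lintegral_const_mul' _ _ hp, Measure.volume_eq_prod,
            lintegral_prod_symm _ hG.aemeasurable]
      _ = p * (q * ∫⁻ ν, N ν * ‖w ν‖ₑ) := by
          congr 1
          rw [← lintegral_const_mul' _ _ hq]
          refine lintegral_congr fun ν => ?_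
          rw [lintegral_mul_const' _ _ (by finiteness), hBM, mul_assoc]
      _ < ⊤ := by finiteness
  have hFint : Integrable F := ⟨hF.aestronglyMeasurable, hfin⟩
  have hswap : ∀ x : α × γ, ∫ ξ, F (ξ, x) = P * (B x.1 x.2 * ψ x.1 * w x.2) := fun x => by
    simp only [F]
    rw [integral_mul_const, hAψ]
    ring
  have hGint := hFint.integral_prod_right
  simp only [hswap] at hGint
  calc _ = ∫ x, ∫ ξ, F (ξ, x) := integral_integral_swap hFint
    _ = ∫ x : α × γ, P * (B x.1 x.2 * ψ x.1 * w x.2) := by simp only [hswap]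
    _ = ∫ ν, ∫ ω, P * (B ω ν * ψ ω * w ν) := integral_prod_symm _ hGint
    _ = _ := by
        rw [← integral_const_mul]
        congr with ν
        rw [integral_const_mul, integral_mul_const, hBψ]
        ring

lemma enorm_cexp_mul_sub_kerQ {n : ℕ} (c : ℂ) (ξ ω : Fin (n + 1) → ℝ) :
    ‖cexp (c * ((∑ j, ξ j - ∑ j, ω j : ℝ) : ℂ) - ((kerQ ξ ω : ℝ) : ℂ))‖ₑ =
      ENNReal.ofReal (Real.exp (c.re * (∑ j, ξ j - ∑ j, ω j) - kerQ ξ ω)) := by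
  rw [enorm_cexp, sub_re, re_mul_ofReal, ofReal_re]

lemma integral_Psi_whittB_succ (m : ℕ) (a b : ℕ → ℂ) (ha : ∀ j < m + 2, (a j).re = 0)
    (hb : ∀ k < m + 2, (b k).re = 0) {s : ℂ} (hs : 0 < s.re) :
    ∫ ξ : Fin (m + 2) → ℝ, cexp (s / 2 * (∑ j, ξ j : ℝ)) *
        (Psi (m + 1) a ξ * whittB (m + 2) b ξ) =
      (∏ j ∈ Finset.range (m + 2), Complex.Gamma ((s - b (m + 1)) / 2 + a j)) *
        (∏ j ∈ Finset.range (m + 2), Complex.Gamma ((s + b (m + 1)) / 2 + a j)) *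
        ∫ ν : Fin (m + 1) → ℝ, Psi (m + 1) a (Fin.snoc ν 0) *
          (cexp (s / 2 * (∑ j, ν j : ℝ)) * whittB (m + 1) b ν) := by
  have hβ := hb (m + 1) (by omega)
  set β := b (m + 1)
  have hc : ((s - β) / 2).re = s.re / 2 := by
    rw [Complex.div_ofNat_re, sub_re, hβ, sub_zero]
  have hd : ((s + β) / 2).re = s.re / 2 := by
    rw [Complex.div_ofNat_re, add_re, hβ, add_zero]
  have hσ : 0 < s.re / 2 := by positivity
  refine Eq.trans ?_ (integral_integral_eigenfunction (M := majPsi (m + 1))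
    (N := fun ν => majPsi (m + 1) (Fin.snoc ν 0))
    (p := ENNReal.ofReal (Real.Gamma (s.re / 2)) ^ (m + 2))
    (q := ENNReal.ofReal (Real.Gamma (s.re / 2)) ^ (m + 2))
    (A := fun ξ ω => cexp ((s - β) / 2 * ((∑ j, ξ j - ∑ j, ω j : ℝ) : ℂ) -
      ((kerQ ξ ω : ℝ) : ℂ)))
    (B := fun ω (ν : Fin (m + 1) → ℝ) => cexp ((s + β) / 2 *
      ((∑ j, ω j - ∑ j, (Fin.snoc ν 0 : Fin (m + 2) → ℝ) j : ℝ) : ℂ) -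
      ((kerQ ω (Fin.snoc ν 0) : ℝ) : ℂ)))
    (ψ := Psi (m + 1) a)
    (w := fun ν => cexp (s / 2 * (∑ j, ν j : ℝ)) * whittB (m + 1) b ν)
    ?_ ?_ (measurable_Psi _ _)
    (Measurable.mul (Continuous.measurable (by fun_prop)) (measurable_whittB m b))
    (enorm_Psi_le _ a ha) (measurable_majPsi _) (by finiteness) (by finiteness)
    (fun ω => ?_) (fun ν => ?_) ?_ ?_ fun ν => ?_)
  · congr with ξ
    rw [whittB_succ, ← mul_assoc, ← integral_const_mul]
    congr with p
    rw [kerQ_snoc_zero, sum_snoc_zero, mul_right_comm _ (Psi (m + 1) a ξ),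
      mul_right_comm _ (Psi (m + 1) a ξ), ← mul_assoc, ← mul_assoc, ← mul_assoc,
      ← Complex.exp_add, ← Complex.exp_add, ← Complex.exp_add]
    congr 3
    push_cast
    ring
  · exact Continuous.measurable (by fun_prop)
  · simp only [Function.uncurry_def, sum_snoc_zero, kerQ_snoc_zero]
    exact Continuous.measurable (by fun_prop)
  · simp only [enorm_cexp_mul_sub_kerQ, hc]
    exact baxter_lintegral (m + 1) hσ ω
  · simp only [enorm_cexp_mul_sub_kerQ, hd]
    exact baxter_lintegral (m + 1) hσ _
  · refine (lintegral_congr fun ν => ?_).trans_lt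
      (lintegral_whittB_majPsi_lt_top m b (fun k hk => hb k (by omega)) hσ)
    rw [enorm_mul, enorm_cexp, re_mul_ofReal, Complex.div_ofNat_re]
    ring
  · exact baxter_integral (m + 1) (hc.symm ▸ hσ) a ha
  · exact baxter_integral (m + 1) (hd.symm ▸ hσ) a ha _

/-- Extend `ξ` by `0` and then by steps of `-2 log π`, so that the root coordinates equal `1`
beyond the given range. -/
def extX {k : ℕ} (ξ : Fin k → ℝ) (j : ℕ) : ℝ := extR0 ξ j - 2 * ((j - k : ℕ) : ℝ) * Real.log Real.pi

lemma extX_of_le {k : ℕ} (ξ : Fin k → ℝ) {j : ℕ} (hj : j ≤ k) : extX ξ j = extR0 ξ j := by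
  simp [extX, Nat.sub_eq_zero_of_le hj]

lemma extX_succ_self {k : ℕ} (ξ : Fin k → ℝ) : extX ξ (k + 1) = -(2 * Real.log Real.pi) := by
  simp [extX, extR0]

lemma extR_expPi_logRoot {k : ℕ} (ξ : Fin k → ℝ) :
    extR (expPi (logRoot ξ)) = rootCoord (extX ξ) := by
  ext j
  by_cases hj : j < k
  · rw [rootCoord, extX_of_le ξ hj.le, extX_of_le ξ hj]
    simp only [extR, hj, dif_pos, expPi, logRoot]
    rw [Real.exp_sub, Real.exp_log Real.pi_pos]
  · have h : j + 1 - k = j - k + 1 := by omega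
    have h' : ¬ j + 1 < k := by omega
    simp only [extR, hj, dif_neg, not_false_eq_true, rootCoord, extX, extR0, h', h]
    rw [eq_div_iff Real.pi_ne_zero, one_mul]
    nth_rewrite 1 [← Real.exp_log Real.pi_pos]
    congr 1
    push_cast
    ring

lemma integral_posSet_mul_whittBr (k : ℕ) (b : ℕ → ℂ) (s : ℂ) (W : (ℕ → ℝ) → ℂ) :
    (2 : ℂ) ^ k * ∫ y in posSet k, W (extR y) * WhittBr k b (extR y) *
        ∏ j ∈ Finset.range k,
          ((extR y j : ℝ) : ℂ) ^ (((j + 1 : ℕ) : ℂ) * s) / ((extR y j : ℝ) : ℂ) =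
      cexp (-(Real.log Real.pi * s * ∑ j ∈ Finset.range k, ((j : ℂ) + 1))) *
        ∫ ξ : Fin k → ℝ, cexp (s / 2 * (∑ j, ξ j : ℝ)) *
          (W (rootCoord (extX ξ)) * whittB k b ξ) := by
  rw [setIntegral_posSet, ← integral_comp_logRoot, ← integral_const_mul]
  congr with ξ
  have hB : WhittBr k b (extR (expPi (logRoot ξ))) = whittB k b ξ :=
    whittBr_congr k b fun j hj => by
      rw [extR_expPi_logRoot, rootCoord, rootCoord, extX_of_le ξ hj.le, extX_of_le ξ hj]
  have hprod : ((∏ j, Real.exp (logRoot ξ j) : ℝ) : ℂ) * ∏ j ∈ Finset.range k,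
      ((extR (expPi (logRoot ξ)) j : ℝ) : ℂ) ^ (((j + 1 : ℕ) : ℂ) * s) /
        ((extR (expPi (logRoot ξ)) j : ℝ) : ℂ) =
      cexp (-(Real.log Real.pi * s * ∑ j ∈ Finset.range k, ((j : ℂ) + 1))) *
        cexp (s / 2 * (∑ j, ξ j : ℝ)) := by
    have hsum : ∑ j, ξ j = ∑ j : Fin k, ((j : ℝ) + 1) * (extR0 ξ j - extR0 ξ (j + 1)) := by
      rw [← Finset.sum_range fun j => ((j : ℝ) + 1) * (extR0 ξ j - extR0 ξ (j + 1)),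
        ← sum_eq_sum_mul_sub_succ _ _ (extR0_self ξ), Finset.sum_range]
      simp only [extR0_val]
    rw [Finset.prod_range, ofReal_prod, ← Finset.prod_mul_distrib, ← Complex.exp_add, hsum,
      Finset.sum_range, ofReal_sum, Finset.mul_sum, Finset.mul_sum, ← Finset.sum_neg_distrib,
      ← Finset.sum_add_distrib, Complex.exp_sum]
    refine Finset.prod_congr rfl fun j _ => ?_
    rw [extR_val, expPi, mul_div_cancel₀ _ (ofReal_ne_zero.2 (Real.exp_ne_zero _)),
      ofReal_exp_cpow, logRoot]
    congr 1
    push_cast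
    ring
  rw [hB, mul_left_comm, hprod, extR_expPi_logRoot]
  ring

lemma whittAhat_eq (m : ℕ) (a : ℕ → ℂ) (X : ℕ → ℝ) :
    WhittAhat (m + 2) a (rootCoord X) =
      cexp (Real.log Real.pi * -(((m + 1 : ℕ) : ℂ) * sumA (m + 2) a / 2) -
        (X (m + 2) / 2 + Real.log Real.pi) * sumA (m + 2) a) *
        Psi (m + 1) (fun j => a j / 2) fun j => X j := by
  rw [WhittAhat, show m + 2 - 1 = m + 1 from rfl, rootCoord_cpow, sub_eq_add_neg (_ * _),
    Complex.exp_add, mul_right_comm, ← whittAr_eq, mul_assoc, ← Complex.exp_add, mul_comm]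
  congr 2
  push_cast
  ring

lemma zetaJ0_eq (m : ℕ) (a b : ℕ → ℂ) (s : ℂ) :
    zetaJ0 (m + 2) a b s =
      cexp (-(Real.log Real.pi * s * ∑ j ∈ Finset.range (m + 2), ((j : ℂ) + 1)) +
        (Real.log Real.pi * -(((m + 1 : ℕ) : ℂ) * sumA (m + 2) a / 2) -
          Real.log Real.pi * sumA (m + 2) a)) *
        ∫ ξ : Fin (m + 2) → ℝ, cexp (s / 2 * (∑ j, ξ j : ℝ)) *
          (Psi (m + 1) (fun j => a j / 2) ξ * whittB (m + 2) b ξ) := by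
  rw [zetaJ0, integral_posSet_mul_whittBr, Complex.exp_add, mul_assoc (cexp _) (cexp _)]
  congr 1
  rw [← integral_const_mul]
  congr with ξ
  have hX : (fun j : Fin (m + 2) => extX ξ j) = ξ :=
    funext fun j => (extX_of_le ξ j.2.le).trans (extR0_val ξ j)
  rw [whittAhat_eq, hX, extX_of_le ξ le_rfl, extR0_self, ofReal_zero, zero_div, zero_add]
  ring

lemma zetaJ1_eq (m : ℕ) (a b : ℕ → ℂ) (s : ℂ) :
    zetaJ1 (m + 1) a b s =
      cexp (-(Real.log Real.pi * s * ∑ j ∈ Finset.range (m + 1), ((j : ℂ) + 1)) +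
        Real.log Real.pi * -(((m + 1 : ℕ) : ℂ) * sumA (m + 2) a / 2)) *
        ∫ ν : Fin (m + 1) → ℝ, Psi (m + 1) (fun j => a j / 2) (Fin.snoc ν 0) *
          (cexp (s / 2 * (∑ j, ν j : ℝ)) * whittB (m + 1) b ν) := by
  rw [zetaJ1, integral_posSet_mul_whittBr, Complex.exp_add, mul_assoc (cexp _) (cexp _)]
  congr 1
  rw [← integral_const_mul]
  congr with ν
  have hX : (fun j : Fin (m + 2) => extX ν j) = Fin.snoc ν 0 := funext fun j => by
    rw [extX_of_le ν (Nat.lt_succ_iff.1 j.2), snoc_zero_eq_extR0]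
  rw [whittAhat_eq, hX, extX_succ_self, show (((-(2 * Real.log Real.pi) : ℝ) : ℂ) / 2 +
    Real.log Real.pi) * sumA (m + 2) a = 0 by push_cast; ring, sub_zero]
  ring

lemma prod_GammaR (n : ℕ) (a : ℕ → ℂ) (s β : ℂ) :
    ∏ j ∈ Finset.range n, GammaR (s + a j + β) * GammaR (s + a j - β) =
      cexp (-(Real.log Real.pi * (n * s + sumA n a))) *
        ((∏ j ∈ Finset.range n, Complex.Gamma ((s - β) / 2 + a j / 2)) *
          ∏ j ∈ Finset.range n, Complex.Gamma ((s + β) / 2 + a j / 2)) := by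
  have h : -(Real.log Real.pi * (n * s + sumA n a)) =
      ∑ j ∈ Finset.range n, -(Real.log Real.pi * (s + a j)) := by
    rw [Finset.sum_neg_distrib, ← Finset.mul_sum, Finset.sum_add_distrib, sumA]
    simp
  rw [h, Complex.exp_sum, ← Finset.prod_mul_distrib, ← Finset.prod_mul_distrib]
  refine Finset.prod_congr rfl fun j _ => ?_
  rw [GammaR, GammaR, pi_cpow, pi_cpow, mul_mul_mul_comm, ← Complex.exp_add]
  ring_nf

/-- Recursion relating the `SO_{2n+1} × GL_n` and `SO_{2n-1} × GL_n` archimedean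
zeta integrals (Proposition 3.1(1) of Ishii–Stade). -/
theorem so_gl_zeta_recursion_one (n : ℕ) (hn : 2 ≤ n)
    (a b : ℕ → ℂ) (ha : ∀ j < n, (a j).re = 0) (hb : ∀ k < n, (b k).re = 0)
    (s : ℂ) (hs : 0 < s.re) :
    zetaJ0 n a b s =
      (∏ j ∈ Finset.range n, GammaR (s + a j + b (n - 1)) * GammaR (s + a j - b (n - 1))) *
        zetaJ1 (n - 1) a b s := by
  obtain ⟨m, rfl⟩ := Nat.exists_eq_add_of_le' hn
  have ha' : ∀ j < m + 2, (a j / 2).re = 0 := fun j hj => by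
    rw [Complex.div_ofNat_re, ha j hj, zero_div]
  rw [show m + 2 - 1 = m + 1 from rfl, zetaJ0_eq, zetaJ1_eq, prod_GammaR,
    integral_Psi_whittB_succ m _ b ha' hb hs, mul_mul_mul_comm, ← Complex.exp_add]
  congr 2
  rw [Finset.sum_range_succ _ (m + 1)]
  push_cast
  ring

end
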